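/- Assume p ≥ 5 if α ∈ (0,1] and p ≥ 7 if α ∈ (1,∞). Then there exists δ > 0 such that for every φ ∈ ℓ²(Z) with ‖φ‖_{ℓ²} < δ there exists a global solution u of the focusing nonlinear lattice equation with initial datum φ, and there exists a unique asymptotic state u₊ ∈ ℓ²(Z) with ‖u₊‖_{ℓ²} = ‖φ‖_{ℓ²} such that ‖u(t) − U(t) u₊‖_{ℓ²(Z)} → 0 as t → ∞. -/

import Mathlib

open scoped BigOperators ENNReal
open Filter Topology MeasureTheory

noncomputable section

/-- The symbol `σ(ξ) = Σ_{k=1}^∞ sin²(kξ/2) / k^{1+α}` for `J_k = k^{-(1+α)}` on `ℤ`. -/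
def sigma1 (α : ℝ) (ξ : ℝ) : ℝ :=
  ∑' k : ℕ, Real.sin (((k : ℝ) + 1) * ξ / 2) ^ 2 / ((k : ℝ) + 1) ^ (1 + α)

/-- The kernel `(K_t)_n = (1/(2π)) ∫_{-π}^{π} e^{i(nξ - σ(ξ)t)} dξ`. -/
def Kker (α t : ℝ) (n : ℤ) : ℂ :=
  (2 * Real.pi)⁻¹ •
    ∫ ξ in (-Real.pi)..Real.pi, Complex.exp (Complex.I * (((n : ℝ) * ξ - sigma1 α ξ * t) : ℝ))

/-- The propagator `(U(t)φ)_n = Σ_m (K_t)_{n-m} φ_m`. -/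
def Uprop (α t : ℝ) (φ : ℤ → ℂ) (n : ℤ) : ℂ :=
  ∑' m : ℤ, Kker α t (n - m) * φ m

/-- `u : [0,∞) → ℓ²(ℤ)` is a global solution of `i u̇ = Lu - |u|^{p-1}u` with initial
datum `φ`, in the Duhamel sense: `u(t) ∈ ℓ²` for all `t ≥ 0`, `t ↦ u(t)` is `ℓ²`-continuous
on `[0,∞)`, and `u(t) = U(t)φ + i ∫_0^t U(t-s)(|u(s)|^{p-1} u(s)) ds`. -/
def IsGlobalSolution (α p : ℝ) (φ : ℤ → ℂ) (u : ℝ → ℤ → ℂ) : Prop :=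
  (∀ t : ℝ, 0 ≤ t → Summable fun n : ℤ => ‖u t n‖ ^ 2) ∧
  (∀ t₀ : ℝ, 0 ≤ t₀ →
    Tendsto (fun t : ℝ => ∑' n : ℤ, ‖u t n - u t₀ n‖ ^ 2)
      (nhdsWithin t₀ (Set.Ici 0)) (𝓝 0)) ∧
  (∀ t : ℝ, 0 ≤ t → ∀ n : ℤ,
    u t n = Uprop α t φ n +
      Complex.I *
        ∫ s in (0 : ℝ)..t, Uprop α (t - s) (fun m => (‖u s m‖ ^ (p - 1) : ℝ) * u s m) n)


/-- A splitting lemma used in the van der Corput arguments. -/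
lemma vdc_split (g : ℝ → ℂ) (hg : Continuous g) (hg1 : ∀ x, ‖g x‖ ≤ 1) (a b c d M : ℝ)
    (hab : a ≤ b) (hc : c ∈ Set.Icc a b) (hd : 0 < d) (hM : 0 ≤ M)
    (h1 : ∀ x y, a ≤ x → x ≤ y → y ≤ b → y ≤ c - d → ‖∫ ξ in x..y, g ξ‖ ≤ M)
    (h2 : ∀ x y, a ≤ x → x ≤ y → y ≤ b → c + d ≤ x → ‖∫ ξ in x..y, g ξ‖ ≤ M) :
    ‖∫ ξ in a..b, g ξ‖ ≤ 2 * M + 2 * d := by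
  have hi : ∀ x y, IntervalIntegrable g volume x y := fun x y => hg.intervalIntegrable x y
  set x := max a (c - d) with hx
  set y := min b (c + d) with hy
  have e : ∫ ξ in a..b, g ξ = (∫ ξ in a..x, g ξ) + (∫ ξ in x..y, g ξ) + ∫ ξ in y..b, g ξ := by
    rw [intervalIntegral.integral_add_adjacent_intervals (hi _ _) (hi _ _),
      intervalIntegral.integral_add_adjacent_intervals (hi _ _) (hi _ _)]
  have hxc : x ≤ c := max_le hc.1 (by linarith)
  have hyc : c ≤ y := le_min hc.2 (by linarith)
  have b1 : ‖∫ ξ in a..x, g ξ‖ ≤ M := by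
    rcases le_total a (c - d) with h | h
    · have : x = c - d := max_eq_right h
      rw [this]; exact h1 _ _ le_rfl h (by linarith [hc.2]) le_rfl
    · have : x = a := max_eq_left h
      rw [this]; simpa using hM
  have b3 : ‖∫ ξ in y..b, g ξ‖ ≤ M := by
    rcases le_total b (c + d) with h | h
    · have : y = b := min_eq_left h
      rw [this]; simpa using hM
    · have : y = c + d := min_eq_right h
      rw [this]; exact h2 _ _ (by linarith [hc.1]) h le_rfl le_rfl
  have b2 : ‖∫ ξ in x..y, g ξ‖ ≤ 2 * d := by
    have := intervalIntegral.norm_integral_le_of_norm_le_const (a := x) (b := y) (f := g) (C := 1)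
      (fun t _ => hg1 t)
    rw [abs_of_nonneg (by linarith)] at this
    have h3 : c - d ≤ x := le_max_right _ _
    have h4 : y ≤ c + d := min_le_right _ _
    linarith
  rw [e]
  calc _ ≤ ‖∫ ξ in a..x, g ξ‖ + ‖∫ ξ in x..y, g ξ‖ + ‖∫ ξ in y..b, g ξ‖ := norm_add₃_le
    _ ≤ _ := by linarith

lemma norm_exp_I_mul_real (x : ℝ) : ‖Complex.exp (Complex.I * (x : ℂ))‖ = 1 := by
  rw [mul_comm]; exact Complex.norm_exp_ofReal_mul_I x

/-- First derivative van der Corput test. -/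
lemma vdc1 (f f' f'' : ℝ → ℝ) (hf : ∀ x, HasDerivAt f (f' x) x)
    (hf' : ∀ x, HasDerivAt f' (f'' x) x) (hc : Continuous f'') (a b μ : ℝ)
    (hab : a ≤ b) (hμ : 0 < μ) (hpos : ∀ x ∈ Set.Icc a b, 0 ≤ f'' x)
    (hlow : ∀ x ∈ Set.Icc a b, μ ≤ f' x) :
    ‖∫ x in a..b, Complex.exp (Complex.I * (f x : ℝ))‖ ≤ 2 / μ := by
  have hu : Set.uIcc a b = Set.Icc a b := Set.uIcc_of_le hab
  have hcf' : Continuous f' := continuous_iff_continuousAt.2 fun x => (hf' x).continuousAt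
  have hcf : Continuous f := continuous_iff_continuousAt.2 fun x => (hf x).continuousAt
  have hp : ∀ x ∈ Set.Icc a b, 0 < f' x := fun x hx => hμ.trans_le (hlow x hx)
  -- derivative of 1/f'
  have hw : ∀ x ∈ Set.Icc a b, HasDerivAt (fun x => (f' x)⁻¹) (-(f'' x) / (f' x) ^ 2) x :=
    fun x hx => (hf' x).inv (hp x hx).ne'
  have hG : ∀ x, HasDerivAt (fun x => Complex.exp (Complex.I * (f x : ℝ)))
      (Complex.exp (Complex.I * (f x : ℝ)) * (Complex.I * (f' x : ℝ))) x := by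
    intro x
    exact ((hf x).ofReal_comp.const_mul Complex.I).cexp
  have hcw : ContinuousOn (fun x => -(f'' x) / (f' x) ^ 2) (Set.Icc a b) :=
    (hc.neg.continuousOn).div (hcf'.pow 2).continuousOn (fun x hx => (pow_pos (hp x hx) 2).ne')
  have key := intervalIntegral.integral_mul_deriv_eq_deriv_mul (a := a) (b := b)
    (u := fun x => (((f' x)⁻¹ : ℝ) : ℂ)) (u' := fun x => ((-(f'' x) / (f' x) ^ 2 : ℝ) : ℂ))
    (v := fun x => Complex.exp (Complex.I * (f x : ℝ)))
    (v' := fun x => Complex.exp (Complex.I * (f x : ℝ)) * (Complex.I * (f' x : ℝ)))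
    (fun x hx => (hw x (hu ▸ hx)).ofReal_comp) (fun x _ => hG x)
    (ContinuousOn.intervalIntegrable (by
      rw [hu]; exact Complex.continuous_ofReal.comp_continuousOn hcw))
    (Continuous.intervalIntegrable (by fun_prop) _ _)
  have e1 : ∫ x in a..b, (((f' x)⁻¹ : ℝ) : ℂ) *
      (Complex.exp (Complex.I * (f x : ℝ)) * (Complex.I * (f' x : ℝ))) =
      Complex.I * ∫ x in a..b, Complex.exp (Complex.I * (f x : ℝ)) := by
    rw [← intervalIntegral.integral_const_mul]
    apply intervalIntegral.integral_congr
    intro x hx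
    have : (f' x : ℂ) ≠ 0 := by exact_mod_cast (hp x (hu ▸ hx)).ne'
    simp only [Complex.ofReal_inv]
    field_simp
  rw [e1] at key
  have e2 : ‖∫ x in a..b, ((-(f'' x) / (f' x) ^ 2 : ℝ) : ℂ) * Complex.exp (Complex.I * (f x : ℝ))‖
      ≤ (f' a)⁻¹ - (f' b)⁻¹ := by
    calc _ ≤ ∫ x in a..b, (f'' x) / (f' x) ^ 2 := by
          apply intervalIntegral.norm_integral_le_of_norm_le hab
          · refine Filter.Eventually.of_forall fun x hx => ?_
            have hx' : x ∈ Set.Icc a b := ⟨hx.1.le, hx.2⟩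
            rw [norm_mul, norm_exp_I_mul_real, mul_one, Complex.norm_real, Real.norm_eq_abs,
              neg_div, abs_neg, abs_of_nonneg (div_nonneg (hpos x hx') (sq_nonneg _))]
          · apply ContinuousOn.intervalIntegrable
            rw [hu]
            exact hc.continuousOn.div (hcf'.pow 2).continuousOn
              (fun x hx => (pow_pos (hp x hx) 2).ne')
      _ = -∫ x in a..b, -(f'' x) / (f' x) ^ 2 := by
          rw [← intervalIntegral.integral_neg]
          congr 1; ext x; ring
      _ = _ := by
          rw [intervalIntegral.integral_eq_sub_of_hasDerivAt (f := fun x => (f' x)⁻¹)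
            (fun x hx => hw x (hu ▸ hx)) (ContinuousOn.intervalIntegrable (by rw [hu]; exact hcw))]
          ring
  have ha : a ∈ Set.Icc a b := ⟨le_rfl, hab⟩
  have hb : b ∈ Set.Icc a b := ⟨hab, le_rfl⟩
  have n1 : ‖∫ x in a..b, Complex.exp (Complex.I * (f x : ℝ))‖ =
      ‖Complex.I * ∫ x in a..b, Complex.exp (Complex.I * (f x : ℝ))‖ := by simp
  rw [n1, key]
  have t1 : ‖(((f' b)⁻¹ : ℝ) : ℂ) * Complex.exp (Complex.I * (f b : ℝ))‖ = (f' b)⁻¹ := by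
    rw [norm_mul, norm_exp_I_mul_real, mul_one, Complex.norm_real, Real.norm_eq_abs,
      abs_of_pos (inv_pos.2 (hp b hb))]
  have t2 : ‖(((f' a)⁻¹ : ℝ) : ℂ) * Complex.exp (Complex.I * (f a : ℝ))‖ = (f' a)⁻¹ := by
    rw [norm_mul, norm_exp_I_mul_real, mul_one, Complex.norm_real, Real.norm_eq_abs,
      abs_of_pos (inv_pos.2 (hp a ha))]
  have t3 : (f' a)⁻¹ ≤ μ⁻¹ := inv_anti₀ hμ (hlow a ha)
  calc _ ≤ (f' b)⁻¹ + (f' a)⁻¹ + ((f' a)⁻¹ - (f' b)⁻¹) := by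
        refine (norm_sub_le _ _).trans (add_le_add ((norm_sub_le _ _).trans ?_) e2)
        rw [t1, t2]
    _ ≤ 2 / μ := by rw [div_eq_mul_inv]; linarith

lemma vdc1_neg (f f' f'' : ℝ → ℝ) (hf : ∀ x, HasDerivAt f (f' x) x)
    (hf' : ∀ x, HasDerivAt f' (f'' x) x) (hc : Continuous f'') (a b μ : ℝ)
    (hab : a ≤ b) (hμ : 0 < μ) (hpos : ∀ x ∈ Set.Icc a b, 0 ≤ f'' x)
    (hlow : ∀ x ∈ Set.Icc a b, f' x ≤ -μ) :
    ‖∫ x in a..b, Complex.exp (Complex.I * (f x : ℝ))‖ ≤ 2 / μ := by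
  have := vdc1 (fun x => f (-x)) (fun x => -f' (-x)) (fun x => f'' (-x))
    (fun x => by
      have h := (hf (-x)).comp x (hasDerivAt_neg x)
      rw [mul_neg_one] at h; exact h)
    (fun x => by
      have h := ((hf' (-x)).comp x (hasDerivAt_neg x)).neg
      rw [mul_neg_one, neg_neg] at h; exact h)
    (by fun_prop) (-b) (-a) μ (by linarith) hμ
    (fun x hx => hpos _ ⟨by linarith [hx.2], by linarith [hx.1]⟩)
    (fun x hx => by linarith [hlow (-x) ⟨by linarith [hx.2], by linarith [hx.1]⟩])
  rw [intervalIntegral.integral_comp_neg (fun x => Complex.exp (Complex.I * (f x : ℝ)))] at this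
  simpa using this

/-- Second derivative van der Corput test. -/
lemma vdc2 (f f' f'' : ℝ → ℝ) (hf : ∀ x, HasDerivAt f (f' x) x)
    (hf' : ∀ x, HasDerivAt f' (f'' x) x) (hc : Continuous f'') (a b l : ℝ)
    (hab : a ≤ b) (hl : 0 < l) (hlow : ∀ x ∈ Set.Icc a b, l ≤ f'' x) :
    ‖∫ x in a..b, Complex.exp (Complex.I * (f x : ℝ))‖ ≤ 6 / Real.sqrt l := by
  have hcf' : Continuous f' := continuous_iff_continuousAt.2 fun x => (hf' x).continuousAt
  have hcf : Continuous f := continuous_iff_continuousAt.2 fun x => (hf x).continuousAt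
  have hmono : ∀ x y, a ≤ x → x ≤ y → y ≤ b → l * (y - x) ≤ f' y - f' x := by
    intro x y hx hxy hy
    have := (convex_Icc a b).mul_sub_le_image_sub_of_le_deriv (f := f') (C := l)
      hcf'.continuousOn (fun z _ => (hf' z).differentiableAt.differentiableWithinAt)
      (fun z hz => by rw [(hf' z).deriv]; exact hlow z (interior_subset hz))
      x ⟨hx, hxy.trans hy⟩ y ⟨hx.trans hxy, hy⟩ hxy
    exact this
  obtain ⟨c, hcI, hc1, hc2⟩ : ∃ c ∈ Set.Icc a b, (∀ x ∈ Set.Icc a b, x < c → f' x ≤ l * (x - c)) ∧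
      (∀ x ∈ Set.Icc a b, c < x → l * (x - c) ≤ f' x) := by
    by_cases h0 : 0 ≤ f' a
    · refine ⟨a, ⟨le_rfl, hab⟩, fun x hx hxa => absurd hx.1 (not_le.2 hxa), fun x hx _ => ?_⟩
      linarith [hmono a x le_rfl hx.1 hx.2]
    · by_cases h1 : f' b ≤ 0
      · refine ⟨b, ⟨hab, le_rfl⟩, fun x hx _ => ?_, fun x hx hxa => absurd hx.2 (not_le.2 hxa)⟩
        linarith [hmono x b hx.1 hx.2 le_rfl]
      · push Not at h0 h1
        obtain ⟨c, hcI, hc0⟩ := intermediate_value_Icc hab hcf'.continuousOn ⟨h0.le, h1.le⟩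
        refine ⟨c, hcI, fun x hx hxc => ?_, fun x hx hxc => ?_⟩
        · linarith [hmono x c hx.1 hxc.le hcI.2]
        · linarith [hmono c x hcI.1 hxc.le hx.2]
  have hs : 0 < Real.sqrt l := Real.sqrt_pos.2 hl
  have hss : Real.sqrt l * Real.sqrt l = l := Real.mul_self_sqrt hl.le
  have hnn : ∀ x ∈ Set.Icc a b, 0 ≤ f'' x := fun x hx => hl.le.trans (hlow x hx)
  have hld : l * (1 / Real.sqrt l) = Real.sqrt l := by
    field_simp; nlinarith
  have hd : 0 < 1 / Real.sqrt l := by positivity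
  have := vdc_split (fun x => Complex.exp (Complex.I * (f x : ℝ))) (by fun_prop)
    (fun x => (norm_exp_I_mul_real _).le) a b c (1 / Real.sqrt l) (2 / Real.sqrt l) hab hcI
    hd (by positivity)
    (fun x y hx hxy hy hyc => vdc1_neg f f' f'' hf hf' hc x y _ hxy hs
      (fun z hz => hnn z ⟨hx.trans hz.1, hz.2.trans hy⟩)
      (fun z hz => by
        have h1 := hc1 z ⟨hx.trans hz.1, hz.2.trans hy⟩ (by linarith [hz.2])
        have h2 : z - c ≤ -(1 / Real.sqrt l) := by linarith [hz.2]
        have h3 := mul_le_mul_of_nonneg_left h2 hl.le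
        linarith))
    (fun x y hx hxy hy hyc => vdc1 f f' f'' hf hf' hc x y _ hxy hs
      (fun z hz => hnn z ⟨hx.trans hz.1, hz.2.trans hy⟩)
      (fun z hz => by
        have h1 := hc2 z ⟨hx.trans hz.1, hz.2.trans hy⟩ (by linarith [hz.1])
        have h2 : (1 / Real.sqrt l) ≤ z - c := by linarith [hz.1]
        have h3 := mul_le_mul_of_nonneg_left h2 hl.le
        linarith))
  refine this.trans (le_of_eq ?_)
  ring

lemma vdc2_neg (f f' f'' : ℝ → ℝ) (hf : ∀ x, HasDerivAt f (f' x) x)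
    (hf' : ∀ x, HasDerivAt f' (f'' x) x) (hc : Continuous f'') (a b l : ℝ)
    (hab : a ≤ b) (hl : 0 < l) (hlow : ∀ x ∈ Set.Icc a b, f'' x ≤ -l) :
    ‖∫ x in a..b, Complex.exp (Complex.I * (f x : ℝ))‖ ≤ 6 / Real.sqrt l := by
  have := vdc2 (fun x => -f x) (fun x => -f' x) (fun x => -f'' x) (fun x => (hf x).neg)
    (fun x => (hf' x).neg) hc.neg a b l hab hl (fun x hx => by linarith [hlow x hx])
  refine le_of_eq_of_le ?_ this
  rw [← Complex.norm_conj, intervalIntegral.intervalIntegral_eq_integral_uIoc,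
    intervalIntegral.intervalIntegral_eq_integral_uIoc]
  simp only [if_pos hab, one_smul]
  rw [← integral_conj]
  congr 2; ext x
  rw [← Complex.exp_conj]
  simp


lemma hasSum_cast {f g : ℕ → ℝ} {a b : ℝ} (h : HasSum f a) (h1 : ∀ k, g k = f k) (h2 : b = a) :
    HasSum g b := by
  have : g = f := funext h1
  rw [this, h2]; exact h

lemma sigma1_term_bound (α ξ : ℝ) (k : ℕ) :
    ‖Real.sin (((k : ℝ) + 1) * ξ / 2) ^ 2 / ((k : ℝ) + 1) ^ (1 + α)‖
      ≤ 1 / ((k : ℝ) + 1) ^ (1 + α) := by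
  have h : (0 : ℝ) < ((k : ℝ) + 1) ^ (1 + α) := by positivity
  rw [Real.norm_eq_abs, abs_of_nonneg (by positivity)]
  gcongr
  exact Real.sin_sq_le_one _

lemma sigma1_summable_aux (α : ℝ) (hα : 0 < α) :
    Summable fun k : ℕ => 1 / ((k : ℝ) + 1) ^ (1 + α) := by
  have := (summable_nat_add_iff 1).2 (Real.summable_one_div_nat_rpow.2 (by linarith : 1 < 1 + α))
  simpa using this

lemma sigma1_summable (α ξ : ℝ) (hα : 0 < α) :
    Summable fun k : ℕ => Real.sin (((k : ℝ) + 1) * ξ / 2) ^ 2 / ((k : ℝ) + 1) ^ (1 + α) :=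
  Summable.of_norm_bounded (sigma1_summable_aux α hα) (sigma1_term_bound α ξ)

lemma sigma1_continuous (α : ℝ) (hα : 0 < α) : Continuous (sigma1 α) := by
  apply continuous_tsum (u := fun k : ℕ => 1 / ((k : ℝ) + 1) ^ (1 + α))
  · intro k
    fun_prop
  · exact sigma1_summable_aux α hα
  · intro k ξ; exact sigma1_term_bound α ξ k

lemma sigma1_neg (α ξ : ℝ) : sigma1 α (-ξ) = sigma1 α ξ := by
  unfold sigma1
  congr 1; ext k
  rw [show ((k : ℝ) + 1) * -ξ / 2 = -(((k : ℝ) + 1) * ξ / 2) by ring, Real.sin_neg, neg_sq]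

lemma norm_integral_conj_exp (f : ℝ → ℝ) (a b : ℝ) :
    ‖∫ x in a..b, Complex.exp (Complex.I * ((-f x : ℝ) : ℂ))‖ =
    ‖∫ x in a..b, Complex.exp (Complex.I * (f x : ℂ))‖ := by
  have e : ∀ x, Complex.exp (Complex.I * ((-f x : ℝ) : ℂ)) =
      (starRingEnd ℂ) (Complex.exp (Complex.I * (f x : ℂ))) := by
    intro x
    rw [← Complex.exp_conj]; simp
  simp_rw [e]
  rw [intervalIntegral.intervalIntegral_conj, Complex.norm_conj]

/-- Reduction of the kernel bound to half of the circle and positive times. -/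
lemma Kker_bound_of_half (α ρ C : ℝ) (hα : 0 < α)
    (h : ∀ a t : ℝ, 0 < t →
      ‖∫ ξ in (0 : ℝ)..Real.pi, Complex.exp (Complex.I * ((a * ξ - sigma1 α ξ * t : ℝ) : ℂ))‖
        ≤ C * t ^ (-ρ)) (hC : 0 ≤ C) :
    ∀ t : ℝ, t ≠ 0 → ∀ n : ℤ, ‖Kker α t n‖ ≤ C * |t| ^ (-ρ) := by
  intro t ht n
  have hs := sigma1_continuous α hα
  -- all signs of `t`
  have h' : ∀ a : ℝ,
      ‖∫ ξ in (0 : ℝ)..Real.pi, Complex.exp (Complex.I * ((a * ξ - sigma1 α ξ * t : ℝ) : ℂ))‖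
        ≤ C * |t| ^ (-ρ) := by
    intro a
    rcases lt_or_gt_of_ne ht with h0 | h0
    · rw [← norm_integral_conj_exp, abs_of_neg h0]
      refine le_of_eq_of_le ?_ (h (-a) (-t) (by linarith))
      congr 2; ext ξ; congr 3; ring
    · rw [abs_of_pos h0]; exact h a t h0
  have hi : ∀ x y, IntervalIntegrable (fun ξ : ℝ => Complex.exp (Complex.I *
      (((n : ℝ) * ξ - sigma1 α ξ * t : ℝ) : ℂ))) volume x y := by
    intro x y
    apply Continuous.intervalIntegrable
    fun_prop
  unfold Kker
  rw [← intervalIntegral.integral_add_adjacent_intervals (hi (-Real.pi) 0) (hi 0 Real.pi)]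
  have e : ∫ ξ in (-Real.pi)..0, Complex.exp (Complex.I *
      (((n : ℝ) * ξ - sigma1 α ξ * t : ℝ) : ℂ)) = ∫ ξ in (0 : ℝ)..Real.pi,
        Complex.exp (Complex.I * (((-(n : ℝ)) * ξ - sigma1 α ξ * t : ℝ) : ℂ)) := by
    have := intervalIntegral.integral_comp_neg (a := 0) (b := Real.pi) (fun ξ : ℝ => Complex.exp
      (Complex.I * (((n : ℝ) * ξ - sigma1 α ξ * t : ℝ) : ℂ)))
    rw [neg_zero] at this
    rw [← this]
    congr 1; ext ξ
    rw [sigma1_neg]; congr 3; ring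
  rw [e, norm_smul]
  have hp : ‖(2 * Real.pi)⁻¹‖ ≤ 1 / 2 := by
    rw [Real.norm_eq_abs, abs_of_pos (by positivity), inv_eq_one_div]
    apply one_div_le_one_div_of_le (by norm_num)
    linarith [Real.pi_gt_three]
  have hCt : 0 ≤ C * |t| ^ (-ρ) := by positivity
  calc _ ≤ (1 / 2) * (C * |t| ^ (-ρ) + C * |t| ^ (-ρ)) := by
        apply mul_le_mul hp _ (norm_nonneg _) (by norm_num)
        exact (norm_add_le _ _).trans (add_le_add (h' _) (h' _))
    _ = _ := by ring

/-- Passing to the limit in the phase. -/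
lemma half_limit (s : ℝ → ℝ) (S : ℕ → ℝ → ℝ) (a t B : ℝ) (hS : ∀ N, Continuous (S N))
    (hlim : ∀ ξ ∈ Set.Icc 0 Real.pi, Tendsto (fun N => S N ξ) atTop (𝓝 (s ξ)))
    (hB : ∀ᶠ N in atTop,
      ‖∫ ξ in (0 : ℝ)..Real.pi, Complex.exp (Complex.I * ((a * ξ - S N ξ * t : ℝ) : ℂ))‖ ≤ B) :
    ‖∫ ξ in (0 : ℝ)..Real.pi, Complex.exp (Complex.I * ((a * ξ - s ξ * t : ℝ) : ℂ))‖ ≤ B := by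
  have : Tendsto (fun N => ∫ ξ in (0 : ℝ)..Real.pi,
      Complex.exp (Complex.I * ((a * ξ - S N ξ * t : ℝ) : ℂ))) atTop
      (𝓝 (∫ ξ in (0 : ℝ)..Real.pi, Complex.exp (Complex.I * ((a * ξ - s ξ * t : ℝ) : ℂ)))) := by
    apply intervalIntegral.tendsto_integral_filter_of_dominated_convergence (fun _ => (1 : ℝ))
    · refine Eventually.of_forall fun N => ?_
      have := hS N
      exact Continuous.aestronglyMeasurable (by fun_prop)
    · exact Eventually.of_forall fun N => Eventually.of_forall fun x _ =>
        (norm_exp_I_mul_real _).le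
    · exact intervalIntegrable_const
    · refine Eventually.of_forall fun x hx => ?_
      rw [Set.uIoc_of_le Real.pi_pos.le] at hx
      have h1 := hlim x ⟨hx.1.le, hx.2⟩
      have h2 : Continuous fun y : ℝ => Complex.exp (Complex.I * ((a * x - y * t : ℝ) : ℂ)) := by
        fun_prop
      exact (h2.tendsto _).comp h1
  exact le_of_tendsto this.norm hB

/-! ### The case `α ≤ 1` -/

/-- `b_k = k^{1-α}` with `b_0 = 0`. -/
def bseq (α : ℝ) (k : ℕ) : ℝ := (k : ℝ) * (k : ℝ) ^ (-α)

/-- minus the second difference of `b`. -/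
def wseq (α : ℝ) (m : ℕ) : ℝ := 2 * bseq α (m + 1) - bseq α m - bseq α (m + 2)

lemma bseq_eq (α : ℝ) (k : ℕ) (hk : k ≠ 0) : bseq α k = (k : ℝ) ^ (1 - α) := by
  unfold bseq
  have : (0 : ℝ) < k := by exact_mod_cast Nat.pos_of_ne_zero hk
  rw [sub_eq_add_neg, Real.rpow_add this, Real.rpow_one]

lemma wseq_zero_pos (α : ℝ) (hα : 0 < α) : 0 < wseq α 0 := by
  unfold wseq
  rw [bseq_eq _ 1 (by norm_num), bseq_eq _ 2 (by norm_num)]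
  simp only [bseq, Nat.cast_zero, zero_mul, Nat.cast_one, Real.one_rpow, Nat.cast_ofNat]
  have : (2 : ℝ) ^ (1 - α) < 2 ^ (1 : ℝ) :=
    Real.rpow_lt_rpow_of_exponent_lt (by norm_num) (by linarith)
  rw [Real.rpow_one] at this
  norm_num
  linarith

lemma wseq_nonneg (α : ℝ) (hα : 0 < α) (hα1 : α ≤ 1) (m : ℕ) : 0 ≤ wseq α m := by
  rcases Nat.eq_zero_or_pos m with rfl | hm
  · exact (wseq_zero_pos α hα).le
  · unfold wseq
    rw [bseq_eq _ _ hm.ne', bseq_eq _ _ (by omega), bseq_eq _ _ (by omega)]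
    have hc := Real.concaveOn_rpow (p := 1 - α) (by linarith) (by linarith)
    have := hc.2 (show (m : ℝ) ∈ Set.Ici (0 : ℝ) by simp)
      (show ((m : ℝ) + 2) ∈ Set.Ici (0 : ℝ) by simp; positivity)
      (show (0 : ℝ) ≤ 1 / 2 by norm_num) (show (0 : ℝ) ≤ 1 / 2 by norm_num) (by norm_num)
    simp only [smul_eq_mul] at this
    rw [show (1 / 2 : ℝ) * m + 1 / 2 * ((m : ℝ) + 2) = (m : ℝ) + 1 by ring] at this
    push_cast
    linarith

lemma bseq_mono (α : ℝ) (hα1 : α ≤ 1) (k : ℕ) : bseq α k ≤ bseq α (k + 1) := by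
  rcases Nat.eq_zero_or_pos k with rfl | hk
  · simp [bseq]
  · rw [bseq_eq _ _ hk.ne', bseq_eq _ _ (by omega)]
    apply Real.rpow_le_rpow (by positivity) (by simp) (by linarith)

lemma bseq_diff_le (α : ℝ) (hα : 0 < α) (k : ℕ) (hk : 0 < k) :
    bseq α (k + 1) - bseq α k ≤ (k : ℝ) ^ (-α) := by
  unfold bseq
  have : ((k + 1 : ℕ) : ℝ) ^ (-α) ≤ (k : ℝ) ^ (-α) :=
    Real.rpow_le_rpow_of_nonpos (by exact_mod_cast hk) (by simp) (by linarith)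
  have h2 := mul_le_mul_of_nonneg_left this (by positivity : (0 : ℝ) ≤ ((k + 1 : ℕ) : ℝ))
  push_cast at h2 ⊢
  linarith

lemma bseq_diff_tendsto (α : ℝ) (hα : 0 < α) (hα1 : α ≤ 1) :
    Tendsto (fun k : ℕ => bseq α (k + 1) - bseq α k) atTop (𝓝 0) := by
  have h1 : Tendsto (fun k : ℕ => (k : ℝ) ^ (-α)) atTop (𝓝 0) :=
    (tendsto_rpow_neg_atTop hα).comp tendsto_natCast_atTop_atTop
  refine tendsto_of_tendsto_of_tendsto_of_le_of_le' tendsto_const_nhds h1 ?_ ?_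
  · exact Eventually.of_forall fun k => sub_nonneg.2 (bseq_mono α hα1 k)
  · filter_upwards [eventually_gt_atTop 0] with k hk
    exact bseq_diff_le α hα k hk

lemma wseq_partial (α : ℝ) (k M : ℕ) :
    ∑ m ∈ Finset.range M, wseq α m * (min k (m + 1) : ℕ) =
      bseq α (min k M) - (min k M : ℕ) * (bseq α (M + 1) - bseq α M) := by
  induction M with
  | zero => simp [bseq]
  | succ M ih =>
    rw [Finset.sum_range_succ, ih]
    unfold wseq
    rcases le_or_gt k M with h | h
    · rw [min_eq_left h, min_eq_left (by omega : k ≤ M + 1)]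
      ring
    · rw [min_eq_right h.le, min_eq_right (by omega : M + 1 ≤ k)]
      push_cast
      ring

lemma wseq_hasSum (α : ℝ) (hα : 0 < α) (hα1 : α ≤ 1) (k : ℕ) :
    HasSum (fun m => wseq α m * (min k (m + 1) : ℕ)) (bseq α k) := by
  rw [hasSum_iff_tendsto_nat_of_nonneg
    (fun m => mul_nonneg (wseq_nonneg α hα hα1 m) (by positivity))]
  simp_rw [wseq_partial]
  have h := ((bseq_diff_tendsto α hα hα1).const_mul (k : ℝ)).const_sub (bseq α k)
  rw [mul_zero, sub_zero] at h
  refine h.congr' ?_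
  filter_upwards [eventually_ge_atTop k] with M hM
  rw [min_eq_left hM]

lemma Q_hasSum (ξ : ℝ) (hξ : ξ ∈ Set.Icc 0 Real.pi) :
    HasSum (fun k : ℕ => Real.sin (((k : ℝ) + 1) * ξ / 2) ^ 2 / ((k : ℝ) + 1) ^ 2)
      ((2 * Real.pi * ξ - ξ ^ 2) / 8) := by
  have hpi := Real.pi_pos
  have h1 := hasSum_one_div_nat_pow_mul_cos (k := 1) one_ne_zero (x := ξ / (2 * Real.pi))
    ⟨by have := hξ.1; positivity, by
      rw [div_le_one (by positivity)]; linarith [hξ.2]⟩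
  have h2 := hasSum_zeta_two
  have h3 := (h2.sub h1).div_const 2
  rw [← hasSum_nat_add_iff' 1] at h3
  refine hasSum_cast h3 (fun k => ?_) ?_
  · have e : Real.cos (2 * Real.pi * ((k + 1 : ℕ) : ℝ) * (ξ / (2 * Real.pi))) =
        1 - 2 * Real.sin (((k : ℝ) + 1) * ξ / 2) ^ 2 := by
      rw [show 2 * Real.pi * ((k + 1 : ℕ) : ℝ) * (ξ / (2 * Real.pi)) =
        2 * (((k : ℝ) + 1) * ξ / 2) by push_cast; field_simp, Real.cos_two_mul, Real.cos_sq']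
      ring
    rw [e]
    push_cast
    field_simp
    ring
  · simp [Polynomial.bernoulli_def, Finset.sum_range_succ]
    norm_num [Nat.choose, bernoulli_two, bernoulli_one]
    field_simp
    ring

def tauP (m : ℕ) (ξ : ℝ) : ℝ := ((m : ℝ) + 1) * ((2 * Real.pi * ξ - ξ ^ 2) / 8) -
  ∑ k ∈ Finset.range m, ((m : ℝ) - k) / ((k : ℝ) + 1) ^ 2 * Real.sin (((k : ℝ) + 1) * ξ / 2) ^ 2

def tauP' (m : ℕ) (ξ : ℝ) : ℝ := ((m : ℝ) + 1) * ((2 * Real.pi - 2 * ξ) / 8) -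
  ∑ k ∈ Finset.range m, ((m : ℝ) - k) / ((k : ℝ) + 1) / 2 * Real.sin (((k : ℝ) + 1) * ξ)

def tauP'' (m : ℕ) (ξ : ℝ) : ℝ := -((m : ℝ) + 1) / 4 -
  ∑ k ∈ Finset.range m, ((m : ℝ) - k) / 2 * Real.cos (((k : ℝ) + 1) * ξ)

lemma hasDerivAt_sin_sq_half (c ξ : ℝ) :
    HasDerivAt (fun x => Real.sin (c * x / 2) ^ 2) (c / 2 * Real.sin (c * ξ)) ξ := by
  have h1 : HasDerivAt (fun x : ℝ => c * x / 2) (c / 2) ξ := by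
    simpa using ((hasDerivAt_id ξ).const_mul c).div_const 2
  have h2 := (h1.sin).pow 2
  refine h2.congr_deriv ?_
  symm
  rw [show c * ξ = 2 * (c * ξ / 2) by ring, Real.sin_two_mul]
  push_cast
  rw [show 2 * (c * ξ / 2) / 2 = c * ξ / 2 by ring]
  ring

lemma tauP_deriv (m : ℕ) (ξ : ℝ) : HasDerivAt (tauP m) (tauP' m ξ) ξ := by
  unfold tauP tauP'
  have h1 : HasDerivAt (fun ξ : ℝ => (2 * Real.pi * ξ - ξ ^ 2) / 8) ((2 * Real.pi - 2 * ξ) / 8) ξ := by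
    have := (((hasDerivAt_id ξ).const_mul (2 * Real.pi)).sub (hasDerivAt_pow 2 ξ)).div_const 8
    simpa using this
  refine (h1.const_mul _).sub (HasDerivAt.fun_sum fun k _ => ?_)
  refine ((hasDerivAt_sin_sq_half ((k : ℝ) + 1) ξ).const_mul
    (((m : ℝ) - k) / ((k : ℝ) + 1) ^ 2)).congr_deriv ?_
  field_simp

lemma tauP'_deriv (m : ℕ) (ξ : ℝ) : HasDerivAt (tauP' m) (tauP'' m ξ) ξ := by
  unfold tauP' tauP''
  have h1 : HasDerivAt (fun ξ : ℝ => (2 * Real.pi - 2 * ξ) / 8) (- 2 / 8) ξ := by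
    have := (((hasDerivAt_id ξ).const_mul 2).const_sub (2 * Real.pi)).div_const 8
    simpa using this
  have h2 := h1.const_mul ((m : ℝ) + 1)
  rw [show ((m : ℝ) + 1) * (-2 / 8) = -((m : ℝ) + 1) / 4 by ring] at h2
  refine h2.sub (HasDerivAt.fun_sum fun k _ => ?_)
  have h3 : HasDerivAt (fun x : ℝ => ((k : ℝ) + 1) * x) ((k : ℝ) + 1) ξ := by
    simpa using (hasDerivAt_id ξ).const_mul ((k : ℝ) + 1)
  refine (h3.sin.const_mul (((m : ℝ) - k) / ((k : ℝ) + 1) / 2)).congr_deriv ?_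
  field_simp

lemma fejer_eq (m : ℕ) (ξ : ℝ) :
    ((m : ℝ) + 1) + 2 * ∑ k ∈ Finset.range m, ((m : ℝ) - k) * Real.cos (((k : ℝ) + 1) * ξ) =
      (∑ j ∈ Finset.range (m + 1), Real.cos (j * ξ)) ^ 2 +
      (∑ j ∈ Finset.range (m + 1), Real.sin (j * ξ)) ^ 2 := by
  induction m with
  | zero => simp
  | succ m ih =>
    have e1 : ∑ k ∈ Finset.range (m + 1), (((m + 1 : ℕ) : ℝ) - k) * Real.cos (((k : ℝ) + 1) * ξ) =
        ∑ k ∈ Finset.range m, ((m : ℝ) - k) * Real.cos (((k : ℝ) + 1) * ξ) +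
        ∑ k ∈ Finset.range (m + 1), Real.cos (((k : ℝ) + 1) * ξ) := by
      have : ∑ k ∈ Finset.range m, ((m : ℝ) - k) * Real.cos (((k : ℝ) + 1) * ξ) =
        ∑ k ∈ Finset.range (m + 1), ((m : ℝ) - k) * Real.cos (((k : ℝ) + 1) * ξ) := by
        rw [Finset.sum_range_succ]; simp
      rw [this, ← Finset.sum_add_distrib]
      refine Finset.sum_congr rfl fun k _ => ?_
      push_cast; ring
    have e2 : (∑ j ∈ Finset.range (m + 1), Real.cos (j * ξ)) * Real.cos ((m + 1 : ℕ) * ξ) +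
        (∑ j ∈ Finset.range (m + 1), Real.sin (j * ξ)) * Real.sin ((m + 1 : ℕ) * ξ) =
        ∑ k ∈ Finset.range (m + 1), Real.cos (((k : ℝ) + 1) * ξ) := by
      rw [Finset.sum_mul, Finset.sum_mul, ← Finset.sum_add_distrib,
        ← Finset.sum_range_reflect (fun k => Real.cos (((k : ℝ) + 1) * ξ))]
      refine Finset.sum_congr rfl fun k hk => ?_
      have hk' : k ≤ m := by simpa [Nat.lt_succ_iff] using hk
      have : ((m + 1 - 1 - k : ℕ) : ℝ) = (m : ℝ) - k := by
        rw [Nat.add_sub_cancel, Nat.cast_sub hk']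
      rw [this, mul_comm (Real.cos _), mul_comm (Real.sin _), ← Real.cos_sub]
      congr 1; push_cast; ring
    rw [Finset.sum_range_succ _ (m + 1), Finset.sum_range_succ _ (m + 1), e1]
    have e3 := Real.sin_sq_add_cos_sq ((m + 1 : ℕ) * ξ)
    push_cast at e2 e3 ⊢
    linear_combination ih - 2 * e2 - e3

lemma tauP''_nonpos (m : ℕ) (ξ : ℝ) : tauP'' m ξ ≤ 0 := by
  have h := fejer_eq m ξ
  have : tauP'' m ξ = -(1 / 4) * (((m : ℝ) + 1) +
      2 * ∑ k ∈ Finset.range m, ((m : ℝ) - k) * Real.cos (((k : ℝ) + 1) * ξ)) := by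
    unfold tauP''
    rw [mul_add, ← mul_assoc, Finset.mul_sum, sub_eq_add_neg, ← Finset.sum_neg_distrib]
    congr 1
    · ring
    · refine Finset.sum_congr rfl fun k _ => ?_
      ring
  rw [this, h]
  nlinarith [sq_nonneg (∑ j ∈ Finset.range (m + 1), Real.cos (j * ξ)),
    sq_nonneg (∑ j ∈ Finset.range (m + 1), Real.sin (j * ξ))]

lemma tauP_hasSum (m : ℕ) (ξ : ℝ) (hξ : ξ ∈ Set.Icc 0 Real.pi) :
    HasSum (fun k : ℕ => Real.sin (((k : ℝ) + 1) * ξ / 2) ^ 2 / ((k : ℝ) + 1) ^ 2 *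
      (min (k + 1) (m + 1) : ℕ)) (tauP m ξ) := by
  have h1 := (Q_hasSum ξ hξ).mul_left ((m : ℝ) + 1)
  have h2 : HasSum (fun k : ℕ => if k ∈ Finset.range m then
      ((m : ℝ) - k) / ((k : ℝ) + 1) ^ 2 * Real.sin (((k : ℝ) + 1) * ξ / 2) ^ 2 else 0)
      (∑ k ∈ Finset.range m,
        ((m : ℝ) - k) / ((k : ℝ) + 1) ^ 2 * Real.sin (((k : ℝ) + 1) * ξ / 2) ^ 2) := by
    convert hasSum_sum_of_ne_finset_zero (s := Finset.range m) (L := .unconditional ℕ) ?_ using 1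
    · exact Finset.sum_congr rfl fun k hk => by rw [if_pos hk]
    · intro k hk; rw [if_neg hk]
  refine hasSum_cast (h1.sub h2) (fun k => ?_) rfl
  by_cases hk : k ∈ Finset.range m
  · rw [if_pos hk, min_eq_left (by have := Finset.mem_range.1 hk; omega)]
    push_cast
    ring
  · rw [if_neg hk, min_eq_right (by have := Finset.mem_range.not.1 hk; omega)]
    push_cast
    ring

lemma sigma1_hasSum_tau (α : ℝ) (hα : 0 < α) (hα1 : α ≤ 1) (ξ : ℝ) (hξ : ξ ∈ Set.Icc 0 Real.pi) :
    HasSum (fun m => wseq α m * tauP m ξ) (sigma1 α ξ) := by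
  set F : ℕ × ℕ → ℝ := fun x => Real.sin (((x.1 : ℝ) + 1) * ξ / 2) ^ 2 / ((x.1 : ℝ) + 1) ^ 2 *
    (wseq α x.2 * (min (x.1 + 1) (x.2 + 1) : ℕ)) with hF
  have hnn : 0 ≤ F := fun x => mul_nonneg (by positivity)
    (mul_nonneg (wseq_nonneg α hα hα1 _) (by positivity))
  have hrow : ∀ k, HasSum (fun m => F (k, m))
      (Real.sin (((k : ℝ) + 1) * ξ / 2) ^ 2 / ((k : ℝ) + 1) ^ (1 + α)) := by
    intro k
    have := (wseq_hasSum α hα hα1 (k + 1)).mul_left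
      (Real.sin (((k : ℝ) + 1) * ξ / 2) ^ 2 / ((k : ℝ) + 1) ^ 2)
    refine hasSum_cast this (fun m => rfl) ?_
    have hk : (0 : ℝ) < (k : ℝ) + 1 := by positivity
    rw [bseq, Nat.cast_add_one, Real.rpow_add hk, Real.rpow_one, Real.rpow_neg hk.le]
    have : (0 : ℝ) < ((k : ℝ) + 1) ^ α := by positivity
    field_simp
  have hsum : Summable F := by
    rw [summable_prod_of_nonneg hnn]
    refine ⟨fun k => (hrow k).summable, ?_⟩
    refine (sigma1_summable α ξ hα).congr fun k => ?_
    rw [(hrow k).tsum_eq]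
  have hS : HasSum F (sigma1 α ξ) := by
    have h1 := hsum.hasSum.prod_fiberwise hrow
    have : sigma1 α ξ = ∑' x, F x := h1.tsum_eq
    rw [this]; exact hsum.hasSum
  have hS' : HasSum (fun x : ℕ × ℕ => F x.swap) (sigma1 α ξ) :=
    (Equiv.prodComm ℕ ℕ).hasSum_iff.2 hS
  refine hS'.prod_fiberwise fun m => ?_
  have := (tauP_hasSum m ξ hξ).mul_left (wseq α m)
  refine hasSum_cast this (fun k => ?_) rfl
  simp only [hF, Prod.swap]
  ring

theorem Kker_bound_le_one (α : ℝ) (hα : 0 < α) (hα1 : α ≤ 1) :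
    ∃ C : ℝ, 0 ≤ C ∧ ∀ t : ℝ, t ≠ 0 → ∀ n : ℤ, ‖Kker α t n‖ ≤ C * |t| ^ (-(1 / 2 : ℝ)) := by
  have hw0 := wseq_zero_pos α hα
  refine ⟨6 / Real.sqrt (wseq α 0 / 4), by positivity, ?_⟩
  refine Kker_bound_of_half α _ _ hα ?_ (by positivity)
  intro a t ht
  have hlim : ∀ ξ ∈ Set.Icc 0 Real.pi, Tendsto
      (fun N => ∑ m ∈ Finset.range N, wseq α m * tauP m ξ) atTop (𝓝 (sigma1 α ξ)) :=
    fun ξ hξ => (sigma1_hasSum_tau α hα hα1 ξ hξ).tendsto_sum_nat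
  have hct : ∀ m, Continuous (tauP m) := fun m =>
    continuous_iff_continuousAt.2 fun x => (tauP_deriv m x).continuousAt
  refine half_limit _ _ a t _ (fun N => continuous_finsetSum _
    fun m _ => continuous_const.mul (hct m)) hlim ?_
  filter_upwards [eventually_ge_atTop 1] with N hN
  have key := vdc2 (fun ξ => a * ξ - (∑ m ∈ Finset.range N, wseq α m * tauP m ξ) * t)
    (fun ξ => a - (∑ m ∈ Finset.range N, wseq α m * tauP' m ξ) * t)
    (fun ξ => -((∑ m ∈ Finset.range N, wseq α m * tauP'' m ξ) * t))
    (fun ξ => by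
      have h1 : HasDerivAt (fun ξ => a * ξ) a ξ := by simpa using (hasDerivAt_id ξ).const_mul a
      exact h1.sub ((HasDerivAt.fun_sum fun m _ => (tauP_deriv m ξ).const_mul _).mul_const t))
    (fun ξ => ((HasDerivAt.fun_sum fun m _ =>
      (tauP'_deriv m ξ).const_mul _).mul_const t).const_sub a)
    (by unfold tauP''; fun_prop) 0 Real.pi (wseq α 0 / 4 * t) Real.pi_pos.le (by positivity)
    (fun ξ _ => by
      have : ∑ m ∈ Finset.range N, wseq α m * tauP'' m ξ ≤ wseq α 0 * tauP'' 0 ξ := by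
        obtain ⟨N', rfl⟩ : ∃ N', N = N' + 1 := ⟨N - 1, by omega⟩
        rw [Finset.sum_range_succ']
        have : ∑ m ∈ Finset.range N', wseq α (m + 1) * tauP'' (m + 1) ξ ≤ 0 :=
          Finset.sum_nonpos fun m _ =>
            mul_nonpos_of_nonneg_of_nonpos (wseq_nonneg α hα hα1 _) (tauP''_nonpos _ _)
        linarith
      have h0 : tauP'' 0 ξ = -(1 / 4) := by simp [tauP'']; norm_num
      rw [h0] at this
      nlinarith)
  refine key.trans (le_of_eq ?_)
  rw [Real.sqrt_mul (by positivity), Real.rpow_neg ht.le, ← Real.sqrt_eq_rpow]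
  field_simp


/-! ### The case `α > 1` -/

def Bk (r c : ℝ) : ℝ := (r * c - r ^ 2) / (1 - 2 * r * c + r ^ 2)

lemma Bk_den_pos (r c : ℝ) (hr : 0 < r) (hr1 : r < 1) (hc : c ≤ 1) :
    0 < 1 - 2 * r * c + r ^ 2 := by
  nlinarith [mul_nonneg hr.le (sub_nonneg.2 hc), pow_pos (sub_pos.2 hr1) 2]

lemma Bk_den_le (r c : ℝ) (hr : 0 < r) (hr1 : r < 1) (hc : -1 ≤ c) :
    1 - 2 * r * c + r ^ 2 ≤ 4 := by
  nlinarith [mul_nonneg hr.le (by linarith : 0 ≤ 1 + c)]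

lemma Bk_diff (r c c' : ℝ) (hr : 0 < r) (hr1 : r < 1) (hc : c ≤ 1) (hc' : -1 ≤ c')
    (h : c' ≤ c) : r * (1 - r ^ 2) / 16 * (c - c') ≤ Bk r c - Bk r c' := by
  have d1 := Bk_den_pos r c hr hr1 hc
  have d2 := Bk_den_pos r c' hr hr1 (h.trans hc)
  have e1 := Bk_den_le r c hr hr1 (hc'.trans h)
  have e2 := Bk_den_le r c' hr hr1 hc'
  have e : Bk r c - Bk r c' = r * (1 - r ^ 2) * (c - c') /
      ((1 - 2 * r * c + r ^ 2) * (1 - 2 * r * c' + r ^ 2)) := by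
    unfold Bk
    rw [div_sub_div _ _ d1.ne' d2.ne']
    congr 1
    ring
  rw [e, div_mul_eq_mul_div]
  have hn : 0 ≤ r * (1 - r ^ 2) * (c - c') :=
    mul_nonneg (mul_nonneg hr.le (by nlinarith)) (by linarith)
  apply div_le_div_of_nonneg_left hn (by positivity)
  nlinarith

lemma Bk_diff_nonneg (r c c' : ℝ) (hr : 0 < r) (hr1 : r < 1) (hc : c ≤ 1) (hc' : -1 ≤ c')
    (h : c' ≤ c) : 0 ≤ Bk r c - Bk r c' :=
  le_trans (mul_nonneg (div_nonneg (mul_nonneg hr.le (by nlinarith)) (by norm_num)) (by linarith))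
    (Bk_diff r c c' hr hr1 hc hc' h)

lemma Bk_neg (r c : ℝ) (hr : 0 < r) (hr1 : r < 1) (hc : c ≤ 0) (hc' : -1 ≤ c) :
    Bk r c ≤ -(r ^ 2 / 4) := by
  have d1 := Bk_den_pos r c hr hr1 (by linarith)
  have e1 := Bk_den_le r c hr hr1 hc'
  unfold Bk
  rw [div_le_iff₀ d1]
  nlinarith [mul_nonneg hr.le (neg_nonneg.2 hc), pow_pos hr 2]

lemma Bk_lower (r c : ℝ) (hr : 0 < r) (hr1 : r < 1) (hc : c ≤ 1) : -(1 / 2) ≤ Bk r c := by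
  have d1 := Bk_den_pos r c hr hr1 hc
  unfold Bk
  rw [le_div_iff₀ d1]
  nlinarith

lemma Bk_nonneg (r c : ℝ) (hr : 0 < r) (hr1 : r < 1) (hc : c ≤ 1) (h : r ≤ c) : 0 ≤ Bk r c := by
  have d1 := Bk_den_pos r c hr hr1 hc
  unfold Bk
  apply div_nonneg _ d1.le
  nlinarith

lemma Bk_abs (r c : ℝ) (hr : 0 < r) (hr1 : r < 1) (hc : c ≤ 1) (hc' : -1 ≤ c) :
    |Bk r c| ≤ r / (1 - r) ^ 2 * 2 := by
  have d1 := Bk_den_pos r c hr hr1 hc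
  have d2 : (1 - r) ^ 2 ≤ 1 - 2 * r * c + r ^ 2 := by nlinarith
  have d3 : 0 < (1 - r) ^ 2 := pow_pos (by linarith) 2
  unfold Bk
  rw [abs_div, abs_of_pos d1, div_mul_eq_mul_div]
  apply div_le_div₀ (by linarith) _ d3 d2
  rw [abs_le]; constructor <;> nlinarith

lemma Bk_hasSum (r ξ : ℝ) (hr : 0 < r) (hr1 : r < 1) :
    HasSum (fun k : ℕ => r ^ (k + 1) * Real.cos (((k : ℝ) + 1) * ξ)) (Bk r (Real.cos ξ)) := by
  set z : ℂ := r * Complex.exp (ξ * Complex.I) with hz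
  have hzn : ‖z‖ = r := by
    rw [hz, norm_mul, Complex.norm_exp_ofReal_mul_I, mul_one, Complex.norm_real,
      Real.norm_eq_abs, abs_of_pos hr]
  have h1 := (hasSum_geometric_of_norm_lt_one (ξ := z) (by rw [hzn]; exact hr1)).mul_left z
  have h2 := Complex.hasSum_re h1
  refine hasSum_cast h2 (fun k => ?_) ?_
  · have : z * z ^ k = ((r ^ (k + 1) : ℝ) : ℂ) * Complex.exp ((((k : ℝ) + 1) * ξ : ℝ) * Complex.I) := by
      rw [← pow_succ', hz, mul_pow, ← Complex.exp_nat_mul]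
      push_cast
      ring_nf
    rw [this, Complex.re_ofReal_mul, Complex.exp_ofReal_mul_I_re]
  · have d1 := Bk_den_pos r (Real.cos ξ) hr hr1 (Real.cos_le_one _)
    have zre : z.re = r * Real.cos ξ := by
      rw [hz, Complex.re_ofReal_mul, Complex.exp_ofReal_mul_I_re]
    have zim : z.im = r * Real.sin ξ := by
      rw [hz, Complex.im_ofReal_mul, Complex.exp_ofReal_mul_I_im]
    have hN : Complex.normSq (1 - z) = 1 - 2 * r * Real.cos ξ + r ^ 2 := by
      rw [Complex.normSq_apply]
      simp only [Complex.sub_re, Complex.one_re, Complex.sub_im, Complex.one_im, zre, zim]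
      have := Real.sin_sq_add_cos_sq ξ
      linear_combination r ^ 2 * this
    rw [Complex.mul_re, Complex.inv_re, Complex.inv_im, hN]
    simp only [Complex.sub_re, Complex.one_re, Complex.sub_im, Complex.one_im, zre, zim]
    unfold Bk
    have := Real.sin_sq_add_cos_sq ξ
    set D := 1 - 2 * r * Real.cos ξ + r ^ 2 with hD
    rw [show r * Real.cos ξ * ((1 - r * Real.cos ξ) / D) - r * Real.sin ξ * (-(0 - r * Real.sin ξ) / D)
      = (r * Real.cos ξ * (1 - r * Real.cos ξ) - r * Real.sin ξ * (r * Real.sin ξ)) / D by ring]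
    congr 1
    linear_combination r ^ 2 * this

/-- The regularised second derivative as an integral. -/
def Hint (a ε c : ℝ) : ℝ := ∫ x in Set.Ioi (0 : ℝ), x ^ (a - 1) * Bk (Real.exp (-(x + ε))) c

lemma Hint_integrable (a ε c : ℝ) (ha : 0 < a) (hε : 0 < ε) (hc : c ≤ 1) (hc' : -1 ≤ c) :
    IntegrableOn (fun x => x ^ (a - 1) * Bk (Real.exp (-(x + ε))) c) (Set.Ioi 0) := by
  have hG := (Real.GammaIntegral_convergent ha).const_mul (2 / (1 - Real.exp (-ε)) ^ 2)
  have he1 : Real.exp (-ε) < 1 := by rw [Real.exp_lt_one_iff]; linarith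
  refine Integrable.mono' hG ?_ ?_
  · apply ContinuousOn.aestronglyMeasurable _ measurableSet_Ioi
    apply ContinuousOn.mul
    · intro x hx
      exact (Real.continuousAt_rpow_const _ _ (Or.inl (ne_of_gt hx))).continuousWithinAt
    · unfold Bk
      apply ContinuousOn.div
      · fun_prop
      · fun_prop
      · intro x hx
        have hx' : 0 < x := hx
        exact (Bk_den_pos _ c (Real.exp_pos _) (by rw [Real.exp_lt_one_iff]; linarith) hc).ne'
  · refine (ae_restrict_mem measurableSet_Ioi).mono fun x hx => ?_
    have hx' : 0 < x := hx
    have hr1 : Real.exp (-(x + ε)) < 1 := by rw [Real.exp_lt_one_iff]; linarith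
    have h1 := Bk_abs _ c (Real.exp_pos (-(x + ε))) hr1 hc hc'
    have h2 : Real.exp (-(x + ε)) ≤ Real.exp (-x) := Real.exp_le_exp.2 (by linarith)
    have h3 : Real.exp (-(x + ε)) ≤ Real.exp (-ε) := Real.exp_le_exp.2 (by linarith)
    have h4 : (1 - Real.exp (-ε)) ^ 2 ≤ (1 - Real.exp (-(x + ε))) ^ 2 :=
      pow_le_pow_left₀ (by linarith) (by linarith) 2
    have h5 : 0 < (1 - Real.exp (-ε)) ^ 2 := pow_pos (by linarith) 2
    rw [norm_mul, Real.norm_eq_abs, Real.norm_eq_abs, abs_of_nonneg (Real.rpow_nonneg hx'.le _)]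
    have h6 : Real.exp (-(x + ε)) / (1 - Real.exp (-(x + ε))) ^ 2 ≤
        Real.exp (-x) / (1 - Real.exp (-ε)) ^ 2 := div_le_div₀ (Real.exp_pos _).le h2 h5 h4
    calc x ^ (a - 1) * |Bk (Real.exp (-(x + ε))) c|
        ≤ x ^ (a - 1) * (Real.exp (-x) / (1 - Real.exp (-ε)) ^ 2 * 2) := by
          apply mul_le_mul_of_nonneg_left (h1.trans (by linarith)) (Real.rpow_nonneg hx'.le _)
      _ = _ := by ring

lemma exp_pow_succ (x : ℝ) (k : ℕ) : Real.exp x ^ (k + 1) = Real.exp (((k : ℝ) + 1) * x) := by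
  rw [← Real.exp_nat_mul]; push_cast; rfl

lemma exp_summable (ε : ℝ) (hε : 0 < ε) :
    Summable fun k : ℕ => Real.exp (-(((k : ℝ) + 1) * ε)) := by
  have h := (summable_nat_add_iff 1).2 (summable_geometric_of_lt_one (Real.exp_pos (-ε)).le
    (by rw [Real.exp_lt_one_iff]; linarith))
  refine h.congr fun k => ?_
  rw [exp_pow_succ]; congr 1; ring

lemma Hint_hasSum (a ε ξ : ℝ) (ha : 0 < a) (hε : 0 < ε) :
    HasSum (fun k : ℕ => Real.Gamma a * ((k : ℝ) + 1) ^ (-a) * Real.exp (-(((k : ℝ) + 1) * ε)) *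
      Real.cos (((k : ℝ) + 1) * ξ)) (Hint a ε (Real.cos ξ)) := by
  have hGam := Real.Gamma_pos_of_pos ha
  have hI : ∀ k : ℕ, IntegrableOn (fun x => x ^ (a - 1) * Real.exp (-(((k : ℝ) + 1) * x)))
      (Set.Ioi 0) := by
    intro k
    have := integrableOn_rpow_mul_exp_neg_mul_rpow (s := a - 1) (p := 1) (b := (k : ℝ) + 1)
      (by linarith) one_pos (by positivity)
    simpa only [Real.rpow_one, neg_mul] using this
  have hV : ∀ k : ℕ, ∫ x in Set.Ioi (0 : ℝ), x ^ (a - 1) * Real.exp (-(((k : ℝ) + 1) * x)) =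
      Real.Gamma a * ((k : ℝ) + 1) ^ (-a) := by
    intro k
    rw [Real.integral_rpow_mul_exp_neg_mul_Ioi ha (by positivity), one_div,
      Real.inv_rpow (by positivity), Real.rpow_neg (by positivity), mul_comm]
  set F : ℕ → ℝ → ℝ := fun k x => x ^ (a - 1) * Real.exp (-(((k : ℝ) + 1) * x)) *
    (Real.exp (-(((k : ℝ) + 1) * ε)) * Real.cos (((k : ℝ) + 1) * ξ)) with hF
  have hFi : ∀ k, Integrable (F k) (volume.restrict (Set.Ioi 0)) :=
    fun k => (hI k).mul_const _
  have hFn : ∀ k, ∫ x in Set.Ioi (0 : ℝ), ‖F k x‖ ≤ Real.Gamma a * Real.exp (-(((k : ℝ) + 1) * ε)) := by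
    intro k
    have e : ∫ x in Set.Ioi (0 : ℝ), ‖F k x‖ = Real.Gamma a * ((k : ℝ) + 1) ^ (-a) *
        |Real.exp (-(((k : ℝ) + 1) * ε)) * Real.cos (((k : ℝ) + 1) * ξ)| := by
      rw [← hV, ← integral_mul_const]
      apply setIntegral_congr_fun measurableSet_Ioi
      intro x hx
      have hx' : 0 < x := hx
      simp only [hF]
      rw [norm_mul, Real.norm_eq_abs, Real.norm_eq_abs, abs_of_nonneg]
      positivity
    rw [e, abs_mul, abs_of_pos (Real.exp_pos _)]
    have h1 : ((k : ℝ) + 1) ^ (-a) ≤ 1 :=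
      Real.rpow_le_one_of_one_le_of_nonpos (by linarith [Nat.cast_nonneg (α := ℝ) k]) (by linarith)
    have h2 := Real.abs_cos_le_one (((k : ℝ) + 1) * ξ)
    have h3 : Real.exp (-(((k : ℝ) + 1) * ε)) * |Real.cos (((k : ℝ) + 1) * ξ)| ≤
      Real.exp (-(((k : ℝ) + 1) * ε)) := mul_le_of_le_one_right (Real.exp_pos _).le h2
    calc _ ≤ Real.Gamma a * 1 * Real.exp (-(((k : ℝ) + 1) * ε)) := by gcongr
      _ = _ := by ring
  have key := hasSum_integral_of_summable_integral_norm hFi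
    (Summable.of_nonneg_of_le (fun k => integral_nonneg fun x => norm_nonneg _) hFn
      ((exp_summable ε hε).mul_left _))
  refine hasSum_cast key (fun k => ?_) ?_
  · simp only [hF]
    rw [integral_mul_const, hV]; ring
  · unfold Hint
    apply setIntegral_congr_fun measurableSet_Ioi
    intro x hx
    have hx' : 0 < x := hx
    have h := (Bk_hasSum (Real.exp (-(x + ε))) ξ (Real.exp_pos _)
      (by rw [Real.exp_lt_one_iff]; linarith)).mul_left (x ^ (a - 1))
    simp only
    rw [← h.tsum_eq]
    congr 1; ext k
    simp only [hF]
    rw [exp_pow_succ, mul_assoc, ← mul_assoc (Real.exp _) (Real.exp _), ← Real.exp_add]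
    congr 3; ring_nf

/-! Estimates of `Hint` -/

def Wc (a : ℝ) : ℝ := ∫ x in Set.Ioc (1 : ℝ) 2, x ^ (a - 1)

lemma Wc_int (a : ℝ) : IntegrableOn (fun x : ℝ => x ^ (a - 1)) (Set.Ioc 1 2) := by
  apply IntegrableOn.mono_set (t := Set.Icc 1 2) _ Set.Ioc_subset_Icc_self
  apply ContinuousOn.integrableOn_Icc
  intro x hx
  exact (Real.continuousAt_rpow_const _ _ (Or.inl (by linarith [hx.1]))).continuousWithinAt

lemma Wc_pos (a : ℝ) : 0 < Wc a := by
  unfold Wc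
  rw [← intervalIntegral.integral_of_le (by norm_num)]
  apply intervalIntegral.intervalIntegral_pos_of_pos_on
  · rw [intervalIntegrable_iff_integrableOn_Ioc_of_le (by norm_num)]; exact Wc_int a
  · intro x hx
    exact Real.rpow_pos_of_pos (by linarith [hx.1]) _
  · norm_num

lemma le_Hlike (a κ : ℝ) (g : ℝ → ℝ) (hg : IntegrableOn (fun x => x ^ (a - 1) * g x) (Set.Ioi 0))
    (h0 : ∀ x, 0 < x → 0 ≤ g x) (h1 : ∀ x ∈ Set.Ioc (1 : ℝ) 2, κ ≤ g x) :
    κ * Wc a ≤ ∫ x in Set.Ioi (0 : ℝ), x ^ (a - 1) * g x := by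
  have hsub : Set.Ioc (1 : ℝ) 2 ⊆ Set.Ioi 0 := fun x hx => lt_trans one_pos hx.1
  calc κ * Wc a = ∫ x in Set.Ioc (1 : ℝ) 2, x ^ (a - 1) * κ := by
        rw [integral_mul_const, Wc, mul_comm]
    _ ≤ ∫ x in Set.Ioc (1 : ℝ) 2, x ^ (a - 1) * g x := by
        apply setIntegral_mono_on ((Wc_int a).mul_const κ) (hg.mono_set hsub) measurableSet_Ioc
        intro x hx
        exact mul_le_mul_of_nonneg_left (h1 x hx) (Real.rpow_nonneg (hsub hx).le _)
    _ ≤ _ := by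
        apply setIntegral_mono_set hg
        · refine (ae_restrict_mem measurableSet_Ioi).mono fun x hx => ?_
          exact mul_nonneg (Real.rpow_nonneg (le_of_lt hx) _) (h0 x hx)
        · exact hsub.eventuallyLE

lemma r_bounds (x ε : ℝ) (hε : 0 < ε) (hε1 : ε ≤ 1) (hx : x ∈ Set.Ioc (1 : ℝ) 2) :
    Real.exp (-3) ≤ Real.exp (-(x + ε)) ∧ Real.exp (-(x + ε)) ≤ Real.exp (-1) :=
  ⟨Real.exp_le_exp.2 (by linarith [hx.2]), Real.exp_le_exp.2 (by linarith [hx.1])⟩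

lemma exp_neg_one_lt : Real.exp (-1) < 2 / 5 := by
  rw [Real.exp_neg, inv_lt_comm₀ (Real.exp_pos _) (by norm_num)]
  have := Real.exp_one_gt_d9
  norm_num; linarith

lemma Hint_diff (a : ℝ) (ha : 0 < a) : ∃ c₀ : ℝ, 0 < c₀ ∧ ∀ ε, 0 < ε → ε ≤ 1 →
    ∀ c c' : ℝ, c ≤ 1 → -1 ≤ c' → c' ≤ c → c₀ * (c - c') ≤ Hint a ε c - Hint a ε c' := by
  refine ⟨Real.exp (-3) * (1 / 2) / 16 * Wc a, by have := Wc_pos a; positivity, ?_⟩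
  intro ε hε hε1 c c' hc hc' h
  have i1 := Hint_integrable a ε c ha hε hc (hc'.trans h)
  have i2 := Hint_integrable a ε c' ha hε (h.trans hc) hc'
  unfold Hint
  rw [← integral_sub i1 i2]
  simp_rw [← mul_sub]
  have hr1 : ∀ x, 0 < x → Real.exp (-(x + ε)) < 1 := fun x hx => by
    rw [Real.exp_lt_one_iff]; linarith
  have := le_Hlike a (Real.exp (-3) * (1 / 2) / 16 * (c - c'))
    (fun x => Bk (Real.exp (-(x + ε))) c - Bk (Real.exp (-(x + ε))) c')
    (by simp_rw [mul_sub]; exact i1.sub i2)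
    (fun x hx => Bk_diff_nonneg _ _ _ (Real.exp_pos _) (hr1 x hx) hc hc' h)
    (fun x hx => by
      refine le_trans ?_ (Bk_diff _ _ _ (Real.exp_pos _) (hr1 x (by linarith [hx.1])) hc hc' h)
      obtain ⟨b1, b2⟩ := r_bounds x ε hε hε1 hx
      have b3 := exp_neg_one_lt
      have b4 : (1 : ℝ) / 2 ≤ 1 - Real.exp (-(x + ε)) ^ 2 := by
        nlinarith [Real.exp_pos (-(x + ε))]
      have b5 : 0 ≤ c - c' := by linarith
      gcongr)
  linarith

lemma Hint_neg (a : ℝ) (ha : 0 < a) : ∃ c₀ : ℝ, 0 < c₀ ∧ ∀ ε, 0 < ε → ε ≤ 1 →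
    ∀ c : ℝ, c ≤ 0 → -1 ≤ c → Hint a ε c ≤ -c₀ := by
  refine ⟨Real.exp (-3) ^ 2 / 4 * Wc a, by have := Wc_pos a; positivity, ?_⟩
  intro ε hε hε1 c hc hc'
  have i1 := Hint_integrable a ε c ha hε (by linarith) hc'
  have hr1 : ∀ x, 0 < x → Real.exp (-(x + ε)) < 1 := fun x hx => by
    rw [Real.exp_lt_one_iff]; linarith
  have := le_Hlike a (Real.exp (-3) ^ 2 / 4) (fun x => -Bk (Real.exp (-(x + ε))) c)
    (by simp_rw [mul_neg]; exact i1.neg)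
    (fun x hx => by
      have := Bk_neg _ c (Real.exp_pos _) (hr1 x hx) hc hc'
      have h2 := sq_nonneg (Real.exp (-(x + ε)))
      linarith)
    (fun x hx => by
      have := Bk_neg _ c (Real.exp_pos _) (hr1 x (by linarith [hx.1])) hc hc'
      obtain ⟨b1, b2⟩ := r_bounds x ε hε hε1 hx
      have := pow_le_pow_left₀ (Real.exp_pos _).le b1 2
      linarith)
  simp_rw [mul_neg] at this
  rw [integral_neg] at this
  unfold Hint
  linarith

lemma Hint_pos (a : ℝ) (ha : 0 < a) : ∃ c₀ c₁ : ℝ, 0 < c₀ ∧ 0 < c₁ ∧ c₁ < 1 ∧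
    ∀ ε, 0 < ε → ε ≤ 1 → ∀ c : ℝ, c₁ ≤ c → c ≤ 1 → c₀ ≤ Hint a ε c := by
  set κ : ℝ := Real.exp (-3) * (1 / 10) / 4 with hκ
  have hκp : 0 < κ * Wc a := by have := Wc_pos a; positivity
  -- choose x₀
  obtain ⟨x₀, hx0, hx0h, hx0s⟩ : ∃ x₀ : ℝ, 0 < x₀ ∧ x₀ ≤ 1 / 2 ∧ x₀ ^ a / a ≤ κ * Wc a := by
    have h1 : Tendsto (fun x : ℝ => x ^ a / a) (𝓝[>] 0) (𝓝 0) := by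
      have : ContinuousAt (fun x : ℝ => x ^ a / a) 0 :=
        (Real.continuousAt_rpow_const _ _ (Or.inr ha.le)).div_const a
      have h2 := this.tendsto
      simp only [Real.zero_rpow ha.ne', zero_div] at h2
      exact h2.mono_left nhdsWithin_le_nhds
    have h3 := h1.eventually (eventually_le_nhds hκp)
    have h4 : ∀ᶠ x : ℝ in 𝓝[>] 0, x ≤ 1 / 2 :=
      nhdsWithin_le_nhds (eventually_le_nhds (by norm_num))
    obtain ⟨x, hx⟩ := (h3.and (h4.and self_mem_nhdsWithin)).exists
    exact ⟨x, hx.2.2, hx.2.1, hx.1⟩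
  have hc1 : Real.exp (-x₀) < 1 := by rw [Real.exp_lt_one_iff]; linarith
  have hc2 : 1 / 2 ≤ Real.exp (-x₀) := by linarith [Real.add_one_le_exp (-x₀)]
  refine ⟨κ * Wc a / 2, Real.exp (-x₀), by positivity, Real.exp_pos _, hc1, ?_⟩
  intro ε hε hε1 c hc hc'
  have i1 := Hint_integrable a ε c ha hε hc' (by linarith)
  have hr1 : ∀ x, 0 < x → Real.exp (-(x + ε)) < 1 := fun x hx => by
    rw [Real.exp_lt_one_iff]; linarith
  have hW0 : IntegrableOn (fun x : ℝ => x ^ (a - 1)) (Set.Ioc 0 x₀) := by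
    rw [← intervalIntegrable_iff_integrableOn_Ioc_of_le hx0.le]
    exact intervalIntegral.intervalIntegrable_rpow' (by linarith)
  have hW0v : ∫ x in Set.Ioc 0 x₀, x ^ (a - 1) = x₀ ^ a / a := by
    rw [← intervalIntegral.integral_of_le hx0.le, integral_rpow (Or.inl (by linarith))]
    simp [Real.zero_rpow ha.ne']
  set G : ℝ → ℝ := (Set.Ioc 0 x₀).indicator (fun _ => (1 / 2 : ℝ)) with hG
  have hGW : (fun x : ℝ => x ^ (a - 1) * G x) =
      (Set.Ioc 0 x₀).indicator (fun x => x ^ (a - 1) * (1 / 2)) := by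
    ext x
    simp only [hG, Set.indicator]
    split_ifs <;> simp
  have hsub : Set.Ioc 0 x₀ ⊆ Set.Ioi 0 := fun x hx => hx.1
  have i2 : IntegrableOn (fun x : ℝ => x ^ (a - 1) * G x) (Set.Ioi 0) := by
    rw [hGW]
    have hW1 : IntegrableOn (fun x : ℝ => x ^ (a - 1) * (1 / 2)) (Set.Ioc 0 x₀) := hW0.mul_const _
    exact (hW1.integrable_indicator measurableSet_Ioc).integrableOn
  have v2 : ∫ x in Set.Ioi (0 : ℝ), x ^ (a - 1) * G x = x₀ ^ a / a * (1 / 2) := by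
    rw [hGW, setIntegral_indicator measurableSet_Ioc, Set.inter_eq_self_of_subset_right hsub,
      integral_mul_const, hW0v]
  have hG0 : ∀ x, 0 ≤ G x := fun x => Set.indicator_nonneg (fun _ _ => by norm_num) x
  have := le_Hlike a κ (fun x => Bk (Real.exp (-(x + ε))) c + G x)
    (by simp_rw [mul_add]; exact i1.add i2)
    (fun x hx => by
      by_cases hxx : x ≤ x₀
      · have : G x = 1 / 2 := by simp [hG, Set.indicator, hx, hxx]
        have h2 := Bk_lower _ c (Real.exp_pos _) (hr1 x hx) hc'
        linarith
      · have h1 : Real.exp (-(x + ε)) ≤ c := by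
          refine le_trans (Real.exp_le_exp.2 ?_) hc
          linarith
        have := Bk_nonneg _ c (Real.exp_pos _) (hr1 x hx) hc' h1
        linarith [hG0 x])
    (fun x hx => by
      have hx0' : 0 < x := by linarith [hx.1]
      obtain ⟨b1, b2⟩ := r_bounds x ε hε hε1 hx
      have b3 := exp_neg_one_lt
      have d1 := Bk_den_pos _ c (Real.exp_pos _) (hr1 x hx0') hc'
      have d2 := Bk_den_le _ c (Real.exp_pos _) (hr1 x hx0') (by linarith)
      have : κ ≤ Bk (Real.exp (-(x + ε))) c := by
        unfold Bk
        rw [le_div_iff₀ d1]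
        have e1 : Real.exp (-3) * (1 / 10) ≤ Real.exp (-(x + ε)) * (c - Real.exp (-(x + ε))) := by
          apply mul_le_mul b1 (by linarith) (by norm_num) (Real.exp_pos _).le
        have e2 := Real.exp_pos (-3)
        rw [hκ]
        nlinarith
      linarith [hG0 x])
  simp_rw [mul_add] at this
  rw [integral_add i1 i2, v2] at this
  unfold Hint
  linarith


lemma vdc3 (f f' f'' : ℝ → ℝ) (hf : ∀ x, HasDerivAt f (f' x) x)
    (hf' : ∀ x, HasDerivAt f' (f'' x) x) (hc : Continuous f'') (a b l d : ℝ)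
    (hab : a ≤ b) (hl : 0 < l) (hd : 0 < d)
    (hmono : ∀ x y, a ≤ x → x ≤ y → y ≤ b → l * (y - x) ≤ f'' y - f'' x) :
    ‖∫ x in a..b, Complex.exp (Complex.I * (f x : ℝ))‖ ≤ 2 * (6 / Real.sqrt (l * d)) + 2 * d := by
  have hcf : Continuous f := continuous_iff_continuousAt.2 fun x => (hf x).continuousAt
  obtain ⟨c, hcI, hc1, hc2⟩ : ∃ c ∈ Set.Icc a b,
      (∀ x ∈ Set.Icc a b, x < c → f'' x ≤ l * (x - c)) ∧
      (∀ x ∈ Set.Icc a b, c < x → l * (x - c) ≤ f'' x) := by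
    by_cases h0 : 0 ≤ f'' a
    · refine ⟨a, ⟨le_rfl, hab⟩, fun x hx hxa => absurd hx.1 (not_le.2 hxa), fun x hx _ => ?_⟩
      linarith [hmono a x le_rfl hx.1 hx.2]
    · by_cases h1 : f'' b ≤ 0
      · refine ⟨b, ⟨hab, le_rfl⟩, fun x hx _ => ?_, fun x hx hxa => absurd hx.2 (not_le.2 hxa)⟩
        linarith [hmono x b hx.1 hx.2 le_rfl]
      · push Not at h0 h1
        obtain ⟨c, hcI, hc0⟩ := intermediate_value_Icc hab hc.continuousOn ⟨h0.le, h1.le⟩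
        refine ⟨c, hcI, fun x hx hxc => ?_, fun x hx hxc => ?_⟩
        · linarith [hmono x c hx.1 hxc.le hcI.2]
        · linarith [hmono c x hcI.1 hxc.le hx.2]
  exact vdc_split (fun x => Complex.exp (Complex.I * (f x : ℝ))) (by fun_prop)
    (fun x => (norm_exp_I_mul_real _).le) a b c d (6 / Real.sqrt (l * d)) hab hcI
    hd (by positivity)
    (fun x y hx hxy hy hyc => vdc2_neg f f' f'' hf hf' hc x y _ hxy (by positivity)
      (fun z hz => by
        have h1 := hc1 z ⟨hx.trans hz.1, hz.2.trans hy⟩ (by linarith [hz.2])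
        have h2 : z - c ≤ -d := by linarith [hz.2]
        have h3 := mul_le_mul_of_nonneg_left h2 hl.le
        linarith))
    (fun x y hx hxy hy hyc => vdc2 f f' f'' hf hf' hc x y _ hxy (by positivity)
      (fun z hz => by
        have h1 := hc2 z ⟨hx.trans hz.1, hz.2.trans hy⟩ (by linarith [hz.1])
        have h2 : d ≤ z - c := by linarith [hz.1]
        have h3 := mul_le_mul_of_nonneg_left h2 hl.le
        linarith))

def Sreg (α ε ξ : ℝ) : ℝ :=
  ∑' k : ℕ, Real.sin (((k : ℝ) + 1) * ξ / 2) ^ 2 *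
    (((k : ℝ) + 1) ^ (-(1 + α)) * Real.exp (-(((k : ℝ) + 1) * ε)))
def Sreg' (α ε ξ : ℝ) : ℝ :=
  ∑' k : ℕ, (((k : ℝ) + 1) / 2 * Real.sin (((k : ℝ) + 1) * ξ)) *
    (((k : ℝ) + 1) ^ (-(1 + α)) * Real.exp (-(((k : ℝ) + 1) * ε)))
def Sreg'' (α ε ξ : ℝ) : ℝ :=
  ∑' k : ℕ, (((k : ℝ) + 1) / 2 * (((k : ℝ) + 1) * Real.cos (((k : ℝ) + 1) * ξ))) *
    (((k : ℝ) + 1) ^ (-(1 + α)) * Real.exp (-(((k : ℝ) + 1) * ε)))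

lemma pow_bd (α : ℝ) (hα : 1 < α) (k : ℕ) (j : ℕ) (hj : j ≤ 2) :
    ((k : ℝ) + 1) ^ j * ((k : ℝ) + 1) ^ (-(1 + α)) ≤ 1 := by
  rw [← Real.rpow_natCast, ← Real.rpow_add (by positivity)]
  apply Real.rpow_le_one_of_one_le_of_nonpos (by linarith [Nat.cast_nonneg (α := ℝ) k])
  have : (j : ℝ) ≤ 2 := by exact_mod_cast hj
  linarith

lemma term_bd (α ε : ℝ) (hα : 1 < α) (k : ℕ) (j : ℕ) (hj : j ≤ 2) (y : ℝ)
    (hy : |y| ≤ ((k : ℝ) + 1) ^ j) :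
    ‖y * (((k : ℝ) + 1) ^ (-(1 + α)) * Real.exp (-(((k : ℝ) + 1) * ε)))‖ ≤
      Real.exp (-(((k : ℝ) + 1) * ε)) := by
  have h1 := pow_bd α hα k j hj
  have h0 : 0 ≤ ((k : ℝ) + 1) ^ (-(1 + α)) := by positivity
  have he := Real.exp_pos (-(((k : ℝ) + 1) * ε))
  rw [norm_mul, Real.norm_eq_abs, Real.norm_eq_abs,
    abs_of_nonneg (mul_nonneg h0 he.le), ← mul_assoc]
  calc _ ≤ 1 * Real.exp (-(((k : ℝ) + 1) * ε)) := by
        apply mul_le_mul_of_nonneg_right _ he.le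
        exact (mul_le_mul_of_nonneg_right hy h0).trans h1
    _ = _ := one_mul _

lemma tb0 (k : ℕ) (ξ : ℝ) : |Real.sin (((k : ℝ) + 1) * ξ / 2) ^ 2| ≤ ((k : ℝ) + 1) ^ 0 := by
  rw [pow_zero, abs_of_nonneg (sq_nonneg _)]; exact Real.sin_sq_le_one _
lemma tb1 (k : ℕ) (ξ : ℝ) :
    |((k : ℝ) + 1) / 2 * Real.sin (((k : ℝ) + 1) * ξ)| ≤ ((k : ℝ) + 1) ^ 1 := by
  have h := Real.abs_sin_le_one (((k : ℝ) + 1) * ξ)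
  rw [abs_mul, abs_of_pos (by positivity)]
  have : (0 : ℝ) < (k : ℝ) + 1 := by positivity
  nlinarith
lemma tb2 (k : ℕ) (ξ : ℝ) :
    |((k : ℝ) + 1) / 2 * (((k : ℝ) + 1) * Real.cos (((k : ℝ) + 1) * ξ))| ≤ ((k : ℝ) + 1) ^ 2 := by
  have h := Real.abs_cos_le_one (((k : ℝ) + 1) * ξ)
  have h0 : (0 : ℝ) < (k : ℝ) + 1 := by positivity
  rw [abs_mul, abs_mul, abs_of_pos (by positivity), abs_of_pos h0]
  have : (0 : ℝ) < ((k : ℝ) + 1) ^ 2 := by positivity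
  nlinarith

lemma Sreg_deriv (α ε : ℝ) (hα : 1 < α) (hε : 0 < ε) (ξ : ℝ) :
    HasDerivAt (Sreg α ε) (Sreg' α ε ξ) ξ := by
  refine hasDerivAt_tsum (exp_summable ε hε) (y₀ := 0)
    (fun k x => (hasDerivAt_sin_sq_half ((k : ℝ) + 1) x).mul_const _)
    (fun k x => term_bd α ε hα k 1 (by norm_num) _ (tb1 k x)) ?_ ξ
  exact Summable.of_norm_bounded (exp_summable ε hε)
    (fun k => term_bd α ε hα k 0 (by norm_num) _ (tb0 k 0))

lemma Sreg'_deriv (α ε : ℝ) (hα : 1 < α) (hε : 0 < ε) (ξ : ℝ) :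
    HasDerivAt (Sreg' α ε) (Sreg'' α ε ξ) ξ := by
  refine hasDerivAt_tsum (exp_summable ε hε) (y₀ := 0)
    (fun k x => ?_)
    (fun k x => term_bd α ε hα k 2 (by norm_num) _ (tb2 k x)) ?_ ξ
  · have h1 : HasDerivAt (fun x : ℝ => ((k : ℝ) + 1) * x) ((k : ℝ) + 1) x := by
      simpa using (hasDerivAt_id x).const_mul ((k : ℝ) + 1)
    exact ((h1.sin.const_mul (((k : ℝ) + 1) / 2)).congr_deriv (by ring)).mul_const _
  · exact Summable.of_norm_bounded (exp_summable ε hε)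
      (fun k => term_bd α ε hα k 1 (by norm_num) _ (tb1 k 0))

lemma Sreg''_cont (α ε : ℝ) (hα : 1 < α) (hε : 0 < ε) : Continuous (Sreg'' α ε) :=
  continuous_tsum (fun k => by fun_prop) (exp_summable ε hε)
    (fun k x => term_bd α ε hα k 2 (by norm_num) _ (tb2 k x))

lemma Sreg''_eq (α ε : ℝ) (hα : 1 < α) (hε : 0 < ε) (ξ : ℝ) :
    Sreg'' α ε ξ = (2 * Real.Gamma (α - 1))⁻¹ * Hint (α - 1) ε (Real.cos ξ) := by
  have hG := Real.Gamma_pos_of_pos (show 0 < α - 1 by linarith)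
  have h := (Hint_hasSum (α - 1) ε ξ (by linarith) hε).mul_left ((2 * Real.Gamma (α - 1))⁻¹)
  rw [← h.tsum_eq]
  unfold Sreg''
  congr 1; ext k
  have : ((k : ℝ) + 1) ^ (-(α - 1)) = ((k : ℝ) + 1) * ((k : ℝ) + 1) * ((k : ℝ) + 1) ^ (-(1 + α)) := by
    rw [show -(α - 1) = 1 + 1 + -(1 + α) by ring, Real.rpow_add (by positivity),
      Real.rpow_add (by positivity), Real.rpow_one]
  rw [this]
  field_simp

lemma Sreg_tendsto (α : ℝ) (hα : 1 < α) (ξ : ℝ) :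
    Tendsto (fun N : ℕ => Sreg α (1 / ((N : ℝ) + 1)) ξ) atTop (𝓝 (sigma1 α ξ)) := by
  have hs := sigma1_summable α ξ (by linarith)
  refine tendsto_tsum_of_dominated_convergence hs ?_ ?_
  · intro k
    have h1 : Tendsto (fun N : ℕ => Real.exp (-(((k : ℝ) + 1) * (1 / ((N : ℝ) + 1))))) atTop (𝓝 1) := by
      have h2 : Tendsto (fun N : ℕ => -(((k : ℝ) + 1) * (1 / ((N : ℝ) + 1)))) atTop (𝓝 0) := by
        simpa only [neg_mul, mul_zero] using
          (tendsto_one_div_add_atTop_nhds_zero_nat (𝕜 := ℝ)).const_mul (-((k : ℝ) + 1))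
      have h4 := (Real.continuous_exp.tendsto 0).comp h2
      rw [Real.exp_zero] at h4
      exact h4
    have h3 := (h1.const_mul (((k : ℝ) + 1) ^ (-(1 + α)))).const_mul
      (Real.sin (((k : ℝ) + 1) * ξ / 2) ^ 2)
    rw [mul_one] at h3
    have h5 : Real.sin (((k : ℝ) + 1) * ξ / 2) ^ 2 / ((k : ℝ) + 1) ^ (1 + α) =
        Real.sin (((k : ℝ) + 1) * ξ / 2) ^ 2 * ((k : ℝ) + 1) ^ (-(1 + α)) := by
      rw [Real.rpow_neg (by positivity)]; rfl
    rw [h5]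
    exact h3
  · refine Eventually.of_forall fun N k => ?_
    rw [Real.rpow_neg (by positivity), ← mul_assoc, ← div_eq_mul_inv, norm_mul,
      Real.norm_eq_abs, Real.norm_eq_abs, Real.abs_exp, abs_of_nonneg
        (div_nonneg (sq_nonneg _) (Real.rpow_nonneg (by positivity) _))]
    apply mul_le_of_le_one_right (by positivity)
    rw [Real.exp_le_one_iff]
    have : 0 ≤ ((k : ℝ) + 1) * (1 / ((N : ℝ) + 1)) := by positivity
    linarith

lemma cos_sub_lower (δ x y : ℝ) (hδ : 0 ≤ δ) (hx : δ ≤ x) (hxy : x ≤ y) (hy : y ≤ Real.pi / 2) :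
    Real.sin δ * (y - x) ≤ Real.cos x - Real.cos y := by
  have := (convex_Icc δ (Real.pi / 2)).mul_sub_le_image_sub_of_le_deriv
    (f := fun x => -Real.cos x) (C := Real.sin δ)
    (by fun_prop) (by fun_prop)
    (fun z hz => by
      have hz' := interior_subset hz
      rw [deriv.fun_neg, Real.deriv_cos, neg_neg]
      exact Real.sin_le_sin_of_le_of_le_pi_div_two (by linarith [Real.pi_pos]) hz'.2 hz'.1)
    x ⟨hx, hxy.trans hy⟩ y ⟨hx.trans hxy, hy⟩ hxy
  simp only [neg_sub_neg] at this
  exact this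

theorem Kker_bound_gt_one (α : ℝ) (hα : 1 < α) :
    ∃ C : ℝ, 0 ≤ C ∧ ∀ t : ℝ, t ≠ 0 → ∀ n : ℤ, ‖Kker α t n‖ ≤ C * |t| ^ (-(1 / 3 : ℝ)) := by
  have ha : 0 < α - 1 := by linarith
  obtain ⟨A, hA, hA'⟩ := Hint_diff (α - 1) ha
  obtain ⟨B, hB, hB'⟩ := Hint_neg (α - 1) ha
  obtain ⟨D, c₁, hD, hc0, hc1, hD'⟩ := Hint_pos (α - 1) ha
  set κ := (2 * Real.Gamma (α - 1))⁻¹ with hκ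
  have hκ0 : 0 < κ := by
    have := Real.Gamma_pos_of_pos ha
    positivity
  set δ := Real.arccos c₁ with hδ
  have hδ0 : 0 < δ := Real.arccos_pos.2 hc1
  have hδ1 : δ < Real.pi / 2 := Real.arccos_lt_pi_div_two.2 hc0
  have hcδ : Real.cos δ = c₁ := Real.cos_arccos (by linarith) hc1.le
  have hsδ : 0 < Real.sin δ := Real.sin_pos_of_pos_of_lt_pi hδ0 (by linarith)
  have hpi := Real.pi_pos
  set L := κ * (A * Real.sin δ) with hL
  have hL0 : 0 < L := by positivity
  set C := Real.pi + 6 / Real.sqrt (κ * D) + (12 / Real.sqrt L + 2) + 6 / Real.sqrt (κ * B) with hC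
  have hC0 : Real.pi ≤ C := by
    have h1 : 0 ≤ 6 / Real.sqrt (κ * D) := by positivity
    have h2 : 0 ≤ 12 / Real.sqrt L := by positivity
    have h3 : 0 ≤ 6 / Real.sqrt (κ * B) := by positivity
    rw [hC]; linarith
  refine ⟨C, hpi.le.trans hC0, ?_⟩
  refine Kker_bound_of_half α _ _ (by linarith) ?_ (hpi.le.trans hC0)
  intro a t ht
  by_cases ht1 : t < 1
  · have h1 : ‖∫ ξ in (0 : ℝ)..Real.pi, Complex.exp (Complex.I * ((a * ξ - sigma1 α ξ * t : ℝ) : ℂ))‖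
        ≤ 1 * |Real.pi - 0| := intervalIntegral.norm_integral_le_of_norm_le_const
          fun x _ => (norm_exp_I_mul_real _).le
    rw [sub_zero, one_mul, abs_of_pos hpi] at h1
    have h2 : 1 ≤ t ^ (-(1 / 3 : ℝ)) := Real.one_le_rpow_of_pos_of_le_one_of_nonpos ht ht1.le (by norm_num)
    nlinarith
  push Not at ht1
  set τ := t ^ (-(1 / 3 : ℝ)) with hτ
  have hτ0 : 0 < τ := Real.rpow_pos_of_pos ht _
  have hsq : 1 / Real.sqrt t ≤ τ := by
    rw [Real.sqrt_eq_rpow, one_div, ← Real.rpow_neg ht.le, hτ]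
    exact Real.rpow_le_rpow_of_exponent_le ht1 (by norm_num)
  have hτ3 : t * τ * τ ^ 2 = 1 := by
    rw [mul_assoc, ← pow_succ', hτ, ← Real.rpow_natCast, ← Real.rpow_mul ht.le]
    norm_num
    rw [Real.rpow_neg_one, mul_inv_cancel₀ ht.ne']
  refine half_limit _ (fun N => Sreg α (1 / ((N : ℝ) + 1))) a t _ (fun N => ?_)
    (fun ξ _ => Sreg_tendsto α hα ξ) (Eventually.of_forall fun N => ?_)
  · exact continuous_iff_continuousAt.2 fun x =>
      (Sreg_deriv α _ hα (by positivity) x).continuousAt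
  set ε := 1 / ((N : ℝ) + 1) with hε
  have hε0 : 0 < ε := by positivity
  have hε1 : ε ≤ 1 := by
    rw [hε, div_le_one (by positivity)]; linarith [Nat.cast_nonneg (α := ℝ) N]
  set f := fun ξ => a * ξ - Sreg α ε ξ * t with hf
  set f' := fun ξ => a - Sreg' α ε ξ * t with hf'
  set f'' := fun ξ => -(Sreg'' α ε ξ * t) with hf''
  have d1 : ∀ ξ, HasDerivAt f (f' ξ) ξ := fun ξ => by
    have h1 : HasDerivAt (fun ξ => a * ξ) a ξ := by simpa using (hasDerivAt_id ξ).const_mul a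
    exact h1.sub ((Sreg_deriv α ε hα hε0 ξ).mul_const t)
  have d2 : ∀ ξ, HasDerivAt f' (f'' ξ) ξ := fun ξ =>
    ((Sreg'_deriv α ε hα hε0 ξ).mul_const t).const_sub a
  have d3 : Continuous f'' := ((Sreg''_cont α ε hα hε0).mul continuous_const).neg
  have hfc : Continuous f := continuous_iff_continuousAt.2 fun x => (d1 x).continuousAt
  have e : ∀ ξ, f'' ξ = -(κ * Hint (α - 1) ε (Real.cos ξ) * t) := fun ξ => by
    rw [hf'']; simp only [Sreg''_eq α ε hα hε0]; rfl
  have k1 := vdc2_neg f f' f'' d1 d2 d3 0 δ (κ * D * t) hδ0.le (by positivity) (fun x hx => by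
    rw [e]
    have : D ≤ Hint (α - 1) ε (Real.cos x) := hD' ε hε0 hε1 _ (by
      rw [← hcδ]
      exact Real.cos_le_cos_of_nonneg_of_le_pi hx.1 (by linarith) hx.2) (Real.cos_le_one _)
    have h3 := mul_le_mul_of_nonneg_right (mul_le_mul_of_nonneg_left this hκ0.le) ht.le
    linarith)
  have k2 := vdc3 f f' f'' d1 d2 d3 δ (Real.pi / 2) (L * t) τ hδ1.le (by positivity) hτ0
    (fun x y hx hxy hy => by
      rw [e, e]
      have h1 := cos_sub_lower δ x y hδ0.le hx hxy hy
      have h2 := hA' ε hε0 hε1 (Real.cos x) (Real.cos y) (Real.cos_le_one _)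
        (Real.neg_one_le_cos _)
        (Real.cos_le_cos_of_nonneg_of_le_pi (hδ0.le.trans hx) (by linarith) hxy)
      have h3 := (mul_le_mul_of_nonneg_left h1 hA.le).trans h2
      have h4 := mul_le_mul_of_nonneg_right (mul_le_mul_of_nonneg_left h3 hκ0.le) ht.le
      rw [hL]
      linarith)
  have k3 := vdc2 f f' f'' d1 d2 d3 (Real.pi / 2) Real.pi (κ * B * t) (by linarith) (by positivity)
    (fun x hx => by
    rw [e]
    have : Hint (α - 1) ε (Real.cos x) ≤ -B := hB' ε hε0 hε1 _
      (Real.cos_nonpos_of_pi_div_two_le_of_le hx.1 (by linarith [hx.2])) (Real.neg_one_le_cos _)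
    have h3 := mul_le_mul_of_nonneg_right (mul_le_mul_of_nonneg_left this hκ0.le) ht.le
    linarith)
  have hIntg : ∀ x y, IntervalIntegrable (fun x => Complex.exp (Complex.I * (f x : ℝ))) volume x y :=
    fun x y => Continuous.intervalIntegrable (by fun_prop) _ _
  have hsplit : ∫ x in (0:ℝ)..Real.pi, Complex.exp (Complex.I * (f x : ℝ)) =
      (∫ x in (0:ℝ)..δ, Complex.exp (Complex.I * (f x : ℝ))) +
      (∫ x in δ..(Real.pi / 2), Complex.exp (Complex.I * (f x : ℝ))) +
      ∫ x in (Real.pi / 2)..Real.pi, Complex.exp (Complex.I * (f x : ℝ)) := by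
    rw [intervalIntegral.integral_add_adjacent_intervals (hIntg _ _) (hIntg _ _),
      intervalIntegral.integral_add_adjacent_intervals (hIntg _ _) (hIntg _ _)]
  have hb1 : ∀ x : ℝ, 0 < x → 6 / Real.sqrt (x * t) ≤ 6 / Real.sqrt x * τ := fun x hx => by
    rw [Real.sqrt_mul hx.le]
    calc 6 / (Real.sqrt x * Real.sqrt t) = 6 / Real.sqrt x * (1 / Real.sqrt t) := by
          field_simp
      _ ≤ _ := mul_le_mul_of_nonneg_left hsq (by positivity)
  have hb2 : 6 / Real.sqrt (L * t * τ) = 6 / Real.sqrt L * τ := by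
    rw [mul_assoc, Real.sqrt_mul hL0.le]
    have h1 : t * τ = (1 / τ) ^ 2 := by field_simp; linarith
    rw [h1, Real.sqrt_sq (by positivity)]
    field_simp
  rw [hb2] at k2
  change ‖∫ x in (0:ℝ)..Real.pi, Complex.exp (Complex.I * (f x : ℝ))‖ ≤ _
  rw [hsplit]
  have k1' := k1.trans (hb1 (κ * D) (by positivity))
  have k3' := k3.trans (hb1 (κ * B) (by positivity))
  calc _ ≤ _ := norm_add₃_le
    _ ≤ 6 / Real.sqrt (κ * D) * τ + (2 * (6 / Real.sqrt L * τ) + 2 * τ) + 6 / Real.sqrt (κ * B) * τ :=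
      add_le_add (add_le_add k1' k2) k3'
    _ ≤ 6 / Real.sqrt (κ * D) * τ + (2 * (6 / Real.sqrt L * τ) + 2 * τ) + 6 / Real.sqrt (κ * B) * τ
        + Real.pi * τ := le_add_of_nonneg_right (by positivity)
    _ = C * τ := by rw [hC]; ring


/-- the decay kernel `N^{-2/(r+2)}` -/
def kd (r : ℕ) (N : ℕ) : ℝ := (N : ℝ) ^ (-(2 / ((r : ℝ) + 2)))

lemma kd_nonneg (r N : ℕ) : 0 ≤ kd r N := Real.rpow_nonneg (Nat.cast_nonneg _) _

lemma kd_pow (r N : ℕ) : kd r N ^ (r + 2) = ((N : ℝ) ^ 2)⁻¹ := by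
  unfold kd
  rw [← Real.rpow_natCast, ← Real.rpow_mul (Nat.cast_nonneg _)]
  have : -(2 / ((r : ℝ) + 2)) * ((r + 2 : ℕ) : ℝ) = -2 := by
    push_cast; field_simp
  rw [this, Real.rpow_neg (Nat.cast_nonneg _)]
  norm_num

lemma kd_sum (r : ℕ) (hr : 2 ≤ r) (M : ℕ) :
    ∑ N ∈ Finset.Icc 1 M, kd r N ≤ 2 * (M : ℝ) ^ ((r : ℝ) / (r + 2)) := by
  have hr' : (2 : ℝ) ≤ r := by exact_mod_cast hr
  set p := (r : ℝ) / (r + 2) with hp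
  have hp1 : p ≤ 1 := by rw [hp, div_le_one (by positivity)]; linarith
  have hp2 : 1 / 2 ≤ p := by rw [hp, div_le_div_iff₀ (by norm_num) (by positivity)]; linarith
  have hpm : p - 1 = -(2 / ((r : ℝ) + 2)) := by rw [hp]; field_simp; ring
  induction M with
  | zero => simp [Real.zero_rpow (by linarith : p ≠ 0)]
  | succ M ih =>
    rw [Finset.sum_Icc_succ_top (by omega)]
    have hN : (0 : ℝ) < (M : ℝ) + 1 := by positivity
    have hs : -1 ≤ -(1 / ((M : ℝ) + 1)) := by
      rw [neg_le_neg_iff, div_le_one hN]; linarith [Nat.cast_nonneg (α := ℝ) M]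
    have h := rpow_one_add_le_one_add_mul_self hs (by linarith) hp1
    have h1 : 1 + -(1 / ((M : ℝ) + 1)) = (M : ℝ) / (M + 1) := by field_simp; ring
    rw [h1, Real.div_rpow (by positivity) hN.le, div_le_iff₀ (by positivity)] at h
    have h2 : kd r (M + 1) = ((M : ℝ) + 1) ^ p / (M + 1) := by
      unfold kd
      rw [← hpm]; push_cast
      rw [Real.rpow_sub hN, Real.rpow_one]
    have h3 : kd r (M + 1) / 2 ≤ p * kd r (M + 1) := by nlinarith [kd_nonneg r (M + 1)]
    have h4 : (1 + p * -(1 / ((M : ℝ) + 1))) * ((M : ℝ) + 1) ^ p = ((M : ℝ) + 1) ^ p - p * kd r (M + 1) := by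
      rw [h2]; ring
    rw [h4] at h
    push_cast
    linarith

lemma young_kd (r : ℕ) (x k l : ℝ) (hx : 0 ≤ x) (hk : 0 ≤ k) (hl : 0 < l) :
    x ^ (r + 1) * k ≤ l * x ^ (r + 2) + (l ^ (r + 1))⁻¹ * k ^ (r + 2) := by
  by_cases h : k ≤ l * x
  · have h1 : x ^ (r + 1) * k ≤ x ^ (r + 1) * (l * x) := mul_le_mul_of_nonneg_left h (by positivity)
    have h2 : 0 ≤ (l ^ (r + 1))⁻¹ * k ^ (r + 2) := by positivity
    have h3 : x ^ (r + 1) * (l * x) = l * x ^ (r + 2) := by ring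
    linarith
  · push Not at h
    have h1 : x ≤ k / l := by rw [le_div_iff₀ hl]; linarith
    have h2 : x ^ (r + 1) ≤ (k / l) ^ (r + 1) := pow_le_pow_left₀ hx h1 _
    have h3 := mul_le_mul_of_nonneg_right h2 hk
    have h4 : (k / l) ^ (r + 1) * k = (l ^ (r + 1))⁻¹ * k ^ (r + 2) := by
      rw [div_pow]; field_simp; ring
    have h5 : 0 ≤ l * x ^ (r + 2) := by positivity
    linarith

/-- `1 + |i-j|` -/
def dd (i j : ℕ) : ℕ := 1 + ((i : ℤ) - j).natAbs

lemma sum_dd_le (n i : ℕ) (hi : i < n) (G : ℕ → ℝ) (hG : ∀ N, 0 ≤ G N) :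
    ∑ j ∈ Finset.range n, G (dd i j) ≤ 2 * ∑ N ∈ Finset.Icc 1 n, G N := by
  rw [← Finset.sum_filter_add_sum_filter_not _ (fun j => i ≤ j), two_mul]
  apply add_le_add
  · rw [← Finset.sum_image (f := G) (g := fun j => dd i j)]
    · apply Finset.sum_le_sum_of_subset_of_nonneg _ (fun N _ _ => hG N)
      intro N hN
      simp only [Finset.mem_image, Finset.mem_filter, Finset.mem_range, dd] at hN
      obtain ⟨j, ⟨h1, h2⟩, rfl⟩ := hN
      simp only [Finset.mem_Icc]; omega
    · intro x hx y hy hxy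
      simp only [Finset.coe_filter, Finset.mem_range, Set.mem_ofPred_eq, dd] at hx hy hxy
      omega
  · rw [← Finset.sum_image (f := G) (g := fun j => dd i j)]
    · apply Finset.sum_le_sum_of_subset_of_nonneg _ (fun N _ _ => hG N)
      intro N hN
      simp only [Finset.mem_image, Finset.mem_filter, Finset.mem_range, dd] at hN
      obtain ⟨j, ⟨h1, h2⟩, rfl⟩ := hN
      simp only [Finset.mem_Icc]; omega
    · intro x hx y hy hxy
      simp only [Finset.coe_filter, Finset.mem_range, Set.mem_ofPred_eq, dd] at hx hy hxy
      omega

lemma hls_inner (r : ℕ) (hr : 2 ≤ r) (n : ℕ) (f : ℕ → ℝ) (hf : ∀ j, 0 ≤ f j) (s : ℝ)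
    (hs : 0 ≤ s) (hS : ∑ j ∈ Finset.range n, f j ^ (r + 2) = s ^ (r + 2)) (i : ℕ) (hi : i < n)
    (ha : 0 < f i) :
    ∑ j ∈ (Finset.range n).filter (fun j => f j ≤ f i), f j ^ (r + 1) * kd r (dd i j) ≤
      9 * (f i * s ^ r) := by
  set a := f i with hadef
  have has : a ≤ s := by
    have h1 : a ^ (r + 2) ≤ s ^ (r + 2) := by
      rw [← hS]
      exact Finset.single_le_sum (f := fun j => f j ^ (r + 2)) (fun j _ => by have := hf j; positivity)
        (Finset.mem_range.2 hi)
    exact le_of_pow_le_pow_left₀ (by omega) hs h1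
  have hs0 : 0 < s := ha.trans_le has
  set l := a / s ^ 2 with hl
  have hl0 : 0 < l := by positivity
  set R := (s / a) ^ (r + 2) with hR
  have hR0 : 0 < R := by positivity
  set M := ⌊R⌋₊ with hM
  set G1 : ℕ → ℝ := fun N => if N ≤ M then a ^ (r + 1) * kd r N else 0 with hG1
  set G2 : ℕ → ℝ := fun N => if M < N then (l ^ (r + 1))⁻¹ * ((N : ℝ) ^ 2)⁻¹ else 0 with hG2
  have hG1n : ∀ N, 0 ≤ G1 N := fun N => by
    simp only [hG1]; split_ifs
    · exact mul_nonneg (by positivity) (kd_nonneg _ _)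
    · exact le_rfl
  have hG2n : ∀ N, 0 ≤ G2 N := fun N => by
    simp only [hG2]; split_ifs <;> positivity
  have hpt : ∀ j, f j ≤ a → f j ^ (r + 1) * kd r (dd i j) ≤
      l * f j ^ (r + 2) + G1 (dd i j) + G2 (dd i j) := by
    intro j hj
    have h0 : 0 ≤ l * f j ^ (r + 2) := mul_nonneg hl0.le (pow_nonneg (hf j) _)
    by_cases hN : dd i j ≤ M
    · have h1 : f j ^ (r + 1) * kd r (dd i j) ≤ a ^ (r + 1) * kd r (dd i j) :=
        mul_le_mul_of_nonneg_right (pow_le_pow_left₀ (hf j) hj _) (kd_nonneg _ _)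
      have h2 : G1 (dd i j) = a ^ (r + 1) * kd r (dd i j) := by simp [hG1, hN]
      linarith [hG2n (dd i j)]
    · have h1 := young_kd r (f j) (kd r (dd i j)) l (hf j) (kd_nonneg _ _) hl0
      rw [kd_pow] at h1
      have h2 : G2 (dd i j) = (l ^ (r + 1))⁻¹ * (((dd i j : ℕ) : ℝ) ^ 2)⁻¹ := by
        simp only [hG2]; rw [if_pos (by omega)]
      linarith [hG1n (dd i j)]
  have b1 : ∑ N ∈ Finset.Icc 1 n, G1 N ≤ 2 * (a * s ^ r) := by
    have h1 : ∑ N ∈ Finset.Icc 1 n, G1 N ≤ a ^ (r + 1) * ∑ N ∈ Finset.Icc 1 M, kd r N := by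
      rw [Finset.mul_sum, ← Finset.sum_filter]
      apply Finset.sum_le_sum_of_subset_of_nonneg
      · intro N hN
        simp only [Finset.mem_filter, Finset.mem_Icc] at hN ⊢
        omega
      · intro N _ _
        exact mul_nonneg (by positivity) (kd_nonneg _ _)
    have h2 := kd_sum r hr M
    have h3 : (M : ℝ) ^ ((r : ℝ) / (r + 2)) ≤ (s / a) ^ r := by
      calc (M : ℝ) ^ ((r : ℝ) / (r + 2)) ≤ R ^ ((r : ℝ) / (r + 2)) :=
            Real.rpow_le_rpow (by positivity) (Nat.floor_le hR0.le) (by positivity)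
        _ = (s / a) ^ r := by
            rw [hR, ← Real.rpow_natCast, ← Real.rpow_mul (by positivity), ← Real.rpow_natCast]
            congr 1; push_cast; field_simp
    calc _ ≤ a ^ (r + 1) * (2 * (s / a) ^ r) :=
          h1.trans (mul_le_mul_of_nonneg_left (by linarith) (by positivity))
      _ = 2 * (a * s ^ r) := by rw [div_pow]; field_simp; ring
  have b2 : ∑ N ∈ Finset.Icc 1 n, G2 N ≤ 2 * (a * s ^ r) := by
    have h1 : ∑ N ∈ Finset.Icc 1 n, G2 N ≤
        (l ^ (r + 1))⁻¹ * ∑ N ∈ Finset.Ioo M (n + 1), ((N : ℝ) ^ 2)⁻¹ := by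
      rw [Finset.mul_sum, ← Finset.sum_filter]
      apply Finset.sum_le_sum_of_subset_of_nonneg
      · intro N hN
        simp only [Finset.mem_filter, Finset.mem_Icc, Finset.mem_Ioo] at hN ⊢
        omega
      · intro N _ _
        positivity
    have h2 : ∑ N ∈ Finset.Ioo M (n + 1), ((N : ℝ) ^ 2)⁻¹ ≤ 2 / R := by
      refine (sum_Ioo_inv_sq_le M (n + 1)).trans ?_
      apply div_le_div_of_nonneg_left (by norm_num) hR0
      exact (Nat.lt_floor_add_one R).le
    calc _ ≤ (l ^ (r + 1))⁻¹ * (2 / R) := h1.trans (mul_le_mul_of_nonneg_left h2 (by positivity))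
      _ = 2 * (a * s ^ r) := by
        rw [hl, hR, div_pow, div_pow]; field_simp; ring
  calc _ ≤ ∑ j ∈ (Finset.range n).filter (fun j => f j ≤ a),
          (l * f j ^ (r + 2) + G1 (dd i j) + G2 (dd i j)) :=
        Finset.sum_le_sum fun j hj => hpt j (Finset.mem_filter.1 hj).2
    _ ≤ ∑ j ∈ Finset.range n, (l * f j ^ (r + 2) + G1 (dd i j) + G2 (dd i j)) :=
        Finset.sum_le_sum_of_subset_of_nonneg (Finset.filter_subset _ _) fun j _ _ =>
          add_nonneg (add_nonneg (mul_nonneg hl0.le (pow_nonneg (hf j) _)) (hG1n _)) (hG2n _)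
    _ = l * s ^ (r + 2) + ∑ j ∈ Finset.range n, G1 (dd i j) + ∑ j ∈ Finset.range n, G2 (dd i j) := by
        rw [Finset.sum_add_distrib, Finset.sum_add_distrib, ← Finset.mul_sum, hS]
    _ ≤ a * s ^ r + 2 * (2 * (a * s ^ r)) + 2 * (2 * (a * s ^ r)) := by
        have e1 : l * s ^ (r + 2) = a * s ^ r := by rw [hl]; field_simp; ring
        have e2 := sum_dd_le n i hi G1 hG1n
        have e3 := sum_dd_le n i hi G2 hG2n
        linarith
    _ = 9 * (a * s ^ r) := by ring

lemma dd_comm (i j : ℕ) : dd i j = dd j i := by unfold dd; omega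

lemma hls (r : ℕ) (hr : 2 ≤ r) (n : ℕ) (f : ℕ → ℝ) (hf : ∀ j, 0 ≤ f j) (s : ℝ)
    (hs : 0 ≤ s) (hS : ∑ j ∈ Finset.range n, f j ^ (r + 2) = s ^ (r + 2)) :
    ∑ i ∈ Finset.range n, ∑ j ∈ Finset.range n, f i ^ (r + 1) * f j ^ (r + 1) * kd r (dd i j) ≤
      18 * s ^ (2 * (r + 1)) := by
  set T : ℕ → ℕ → ℝ := fun i j => f i ^ (r + 1) * f j ^ (r + 1) * kd r (dd i j) with hT
  have hTn : ∀ i j, 0 ≤ T i j := fun i j =>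
    mul_nonneg (mul_nonneg (pow_nonneg (hf i) _) (pow_nonneg (hf j) _)) (kd_nonneg _ _)
  have hTc : ∀ i j, T i j = T j i := fun i j => by simp only [hT, dd_comm i j]; ring
  have h1 : ∀ i j, T i j ≤ (if f j ≤ f i then T i j else 0) + (if f i ≤ f j then T j i else 0) := by
    intro i j
    have := hTn i j
    have := hTc i j
    split_ifs <;> linarith
  have h2 : ∑ i ∈ Finset.range n, ∑ j ∈ Finset.range n, (if f j ≤ f i then T i j else 0) ≤
      9 * s ^ (2 * (r + 1)) := by
    calc _ ≤ ∑ i ∈ Finset.range n, 9 * s ^ r * f i ^ (r + 2) := by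
          apply Finset.sum_le_sum
          intro i hi
          rw [← Finset.sum_filter]
          by_cases ha : 0 < f i
          · have := hls_inner r hr n f hf s hs hS i (Finset.mem_range.1 hi) ha
            have h3 := mul_le_mul_of_nonneg_left this (pow_nonneg (hf i) (r + 1))
            rw [Finset.mul_sum] at h3
            calc _ = _ := Finset.sum_congr rfl fun j _ => by simp only [hT]; rw [mul_assoc]
              _ ≤ _ := h3
              _ = _ := by ring
          · have h0 : f i = 0 := le_antisymm (not_lt.1 ha) (hf i)
            simp [hT, h0]
      _ = 9 * s ^ (2 * (r + 1)) := by
          rw [← Finset.mul_sum, hS]; ring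
  calc _ ≤ ∑ i ∈ Finset.range n, ∑ j ∈ Finset.range n,
        ((if f j ≤ f i then T i j else 0) + (if f i ≤ f j then T j i else 0)) :=
        Finset.sum_le_sum fun i _ => Finset.sum_le_sum fun j _ => h1 i j
    _ = ∑ i ∈ Finset.range n, ∑ j ∈ Finset.range n, (if f j ≤ f i then T i j else 0) +
        ∑ i ∈ Finset.range n, ∑ j ∈ Finset.range n, (if f j ≤ f i then T i j else 0) := by
        simp only [Finset.sum_add_distrib]
        congr 1
        exact Finset.sum_comm
    _ ≤ 18 * s ^ (2 * (r + 1)) := by linarith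

/-- Dual discrete Strichartz estimate. -/
lemma dual_strichartz {H : Type*} [NormedAddCommGroup H] [InnerProductSpace ℂ H]
    (r : ℕ) (hr : 2 ≤ r) (n : ℕ) (f : ℕ → ℝ) (hf : ∀ j, 0 ≤ f j) (s : ℝ)
    (hs : 0 ≤ s) (hS : ∑ j ∈ Finset.range n, f j ^ (r + 2) = s ^ (r + 2))
    (A : ℝ) (hA : 0 ≤ A) (e : ℕ → H)
    (he : ∀ i j, ‖inner ℂ (e i) (e j)‖ ≤ A * kd r (dd i j))
    (c : ℕ → ℂ) (hc : ∀ j, ‖c j‖ ≤ f j ^ (r + 1)) :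
    ‖∑ j ∈ Finset.range n, c j • e j‖ ≤ Real.sqrt (18 * A) * s ^ (r + 1) := by
  have h1 : ‖∑ j ∈ Finset.range n, c j • e j‖ ^ 2 ≤ 18 * A * (s ^ (r + 1)) ^ 2 := by
    have h2 : ‖∑ j ∈ Finset.range n, c j • e j‖ ^ 2 =
        ‖inner ℂ (∑ j ∈ Finset.range n, c j • e j) (∑ j ∈ Finset.range n, c j • e j)‖ := by
      rw [inner_self_eq_norm_sq_to_K]; simp
    rw [h2, sum_inner]
    calc _ ≤ ∑ i ∈ Finset.range n, ∑ j ∈ Finset.range n, A * (f i ^ (r + 1) * f j ^ (r + 1) * kd r (dd i j)) := by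
          refine (norm_sum_le _ _).trans (Finset.sum_le_sum fun i _ => ?_)
          rw [inner_sum]
          refine (norm_sum_le _ _).trans (Finset.sum_le_sum fun j _ => ?_)
          rw [inner_smul_left, inner_smul_right, norm_mul, norm_mul, RCLike.norm_conj]
          calc _ ≤ f i ^ (r + 1) * (f j ^ (r + 1) * (A * kd r (dd i j))) := by
                have := hf i
                have := hf j
                gcongr
                · exact hc i
                · exact hc j
                · exact he i j
            _ = _ := by ring
      _ = A * ∑ i ∈ Finset.range n, ∑ j ∈ Finset.range n, (f i ^ (r + 1) * f j ^ (r + 1) * kd r (dd i j)) := by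
          simp only [Finset.mul_sum]
      _ ≤ A * (18 * s ^ (2 * (r + 1))) := mul_le_mul_of_nonneg_left (hls r hr n f hf s hs hS) hA
      _ = _ := by ring
  have h3 := Real.sqrt_le_sqrt h1
  rwa [Real.sqrt_sq (norm_nonneg _), Real.sqrt_mul (by positivity), Real.sqrt_sq (by positivity)] at h3


abbrev Hs : Type := lp (fun _ : ℤ => ℂ) 2

instance factTwoPi : Fact (0 < 2 * Real.pi) := ⟨by positivity⟩

abbrev Circ : Type := AddCircle (2 * Real.pi)
abbrev L2C : Type := Lp ℂ 2 (AddCircle.haarAddCircle (T := 2 * Real.pi))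

lemma sigma1_periodic (α : ℝ) : Function.Periodic (sigma1 α) (2 * Real.pi) := by
  intro ξ
  unfold sigma1
  congr 1; ext k
  have h1 : ((k : ℝ) + 1) * (ξ + 2 * Real.pi) / 2 =
      ((k : ℝ) + 1) * ξ / 2 + ((k + 1 : ℕ) : ℝ) * Real.pi := by push_cast; ring
  have h2 : Real.sin (((k : ℝ) + 1) * (ξ + 2 * Real.pi) / 2) ^ 2 =
      Real.sin (((k : ℝ) + 1) * ξ / 2) ^ 2 := by
    rw [h1, Real.sin_add_nat_mul_pi, mul_pow, ← pow_mul, mul_comm (k + 1) 2, pow_mul]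
    norm_num
  rw [h2]

def sigC (α : ℝ) : Circ → ℝ := (sigma1_periodic α).lift

lemma sigC_coe (α ξ : ℝ) : sigC α (ξ : Circ) = sigma1 α ξ := rfl

lemma sigC_cont (α : ℝ) (hα : 0 < α) : Continuous (sigC α) :=
  (QuotientAddGroup.isQuotientMap_mk _).continuous_iff.2 (sigma1_continuous α hα)

def sigBound (α : ℝ) : ℝ := ∑' k : ℕ, 1 / ((k : ℝ) + 1) ^ (1 + α)

lemma sigC_bound (α : ℝ) (hα : 0 < α) (x : Circ) : |sigC α x| ≤ sigBound α := by
  induction x using QuotientAddGroup.induction_on with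
  | H ξ =>
    change |sigma1 α ξ| ≤ _
    exact tsum_of_norm_bounded (sigma1_summable_aux α hα).hasSum (sigma1_term_bound α ξ)

/-- multiplier -/
def mult (α t : ℝ) (x : Circ) : ℂ := Complex.exp (Complex.I * ((-(sigC α x * t) : ℝ) : ℂ))

lemma mult_norm (α t : ℝ) (x : Circ) : ‖mult α t x‖ = 1 := norm_exp_I_mul_real _

lemma mult_cont (α t : ℝ) (hα : 0 < α) : Continuous (mult α t) := by
  have := sigC_cont α hα
  unfold mult; fun_prop

lemma mult_memLp (α t : ℝ) (hα : 0 < α) (f : L2C) :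
    MemLp (fun x => mult α t x * f x) 2 (AddCircle.haarAddCircle (T := 2 * Real.pi)) := by
  refine (Lp.memLp f).of_le ((mult_cont α t hα).aestronglyMeasurable.mul
    (Lp.aestronglyMeasurable f)) (Eventually.of_forall fun x => ?_)
  rw [norm_mul, mult_norm, one_mul]

def Mop (α : ℝ) (hα : 0 < α) (t : ℝ) : L2C →ₗᵢ[ℂ] L2C where
  toFun f := (mult_memLp α t hα f).toLp _
  map_add' f g := by
    rw [← MemLp.toLp_add]
    apply MemLp.toLp_congr
    filter_upwards [Lp.coeFn_add f g] with x hx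
    rw [Pi.add_apply, hx, Pi.add_apply, mul_add]
  map_smul' c f := by
    rw [RingHom.id_apply, ← MemLp.toLp_const_smul]
    apply MemLp.toLp_congr
    filter_upwards [Lp.coeFn_smul c f] with x hx
    simp [hx]; ring
  norm_map' f := by
    change ‖(mult_memLp α t hα f).toLp _‖ = _
    rw [Lp.norm_toLp, Lp.norm_def]
    congr 1
    apply eLpNorm_congr_norm_ae
    exact Eventually.of_forall fun x => by rw [norm_mul, mult_norm, one_mul]

lemma Mop_coe (α : ℝ) (hα : 0 < α) (t : ℝ) (f : L2C) :
    Mop α hα t f =ᵐ[AddCircle.haarAddCircle] fun x => mult α t x * f x :=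
  MemLp.coeFn_toLp (mult_memLp α t hα f)

lemma Mop_zero (α : ℝ) (hα : 0 < α) (f : L2C) : Mop α hα 0 f = f := by
  apply Lp.ext
  filter_upwards [Mop_coe α hα 0 f] with x hx
  rw [hx]; simp [mult]

lemma Mop_add (α : ℝ) (hα : 0 < α) (t s : ℝ) (f : L2C) :
    Mop α hα (t + s) f = Mop α hα t (Mop α hα s f) := by
  apply Lp.ext
  filter_upwards [Mop_coe α hα (t + s) f, Mop_coe α hα s f, Mop_coe α hα t (Mop α hα s f)]
    with x h1 h2 h3
  rw [h1, h3, h2, ← mul_assoc]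
  congr 1
  unfold mult
  rw [← Complex.exp_add]; congr 1; push_cast; ring

lemma Mop_lip (α : ℝ) (hα : 0 < α) (t s : ℝ) (f : L2C) :
    ‖Mop α hα t f - Mop α hα s f‖ ≤ sigBound α * |t - s| * ‖f‖ := by
  have hb : 0 ≤ sigBound α := (abs_nonneg _).trans (sigC_bound α hα (0 : Circ))
  apply Lp.norm_le_mul_norm_of_ae_le_mul
  filter_upwards [Mop_coe α hα t f, Mop_coe α hα s f, Lp.coeFn_sub (Mop α hα t f) (Mop α hα s f)]
    with x h1 h2 h3
  rw [h3, Pi.sub_apply, h1, h2, ← sub_mul, norm_mul]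
  apply mul_le_mul_of_nonneg_right _ (norm_nonneg _)
  have e1 : mult α t x - mult α s x = mult α s x *
      (Complex.exp (Complex.I * ((-(sigC α x * (t - s)) : ℝ) : ℂ)) - 1) := by
    unfold mult
    rw [mul_sub, ← Complex.exp_add, mul_one]; congr 2; push_cast; ring
  rw [e1, norm_mul, mult_norm, one_mul]
  refine (Real.norm_exp_I_mul_ofReal_sub_one_le).trans ?_
  rw [norm_neg, norm_mul]
  exact mul_le_mul_of_nonneg_right (sigC_bound α hα x) (norm_nonneg _)

/-- The propagator on ℓ². -/
def UH (α : ℝ) (hα : 0 < α) (t : ℝ) : Hs →ₗᵢ[ℂ] Hs :=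
  (fourierBasis (T := 2 * Real.pi)).repr.toLinearIsometry.comp
    ((Mop α hα t).comp (fourierBasis (T := 2 * Real.pi)).repr.symm.toLinearIsometry)

lemma UH_apply (α : ℝ) (hα : 0 < α) (t : ℝ) (x : Hs) : UH α hα t x =
  (fourierBasis (T := 2 * Real.pi)).repr (Mop α hα t
    ((fourierBasis (T := 2 * Real.pi)).repr.symm x)) := rfl

lemma UH_zero (α : ℝ) (hα : 0 < α) (x : Hs) : UH α hα 0 x = x := by
  simp [UH_apply, Mop_zero]

lemma UH_add (α : ℝ) (hα : 0 < α) (t s : ℝ) (x : Hs) :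
    UH α hα (t + s) x = UH α hα t (UH α hα s x) := by
  simp [UH_apply, Mop_add]

lemma UH_lip (α : ℝ) (hα : 0 < α) (t s : ℝ) (x : Hs) :
    ‖UH α hα t x - UH α hα s x‖ ≤ sigBound α * |t - s| * ‖x‖ := by
  rw [UH_apply, UH_apply, ← map_sub, LinearIsometryEquiv.norm_map]
  refine (Mop_lip α hα t s _).trans (le_of_eq ?_)
  rw [LinearIsometryEquiv.norm_map]

lemma Kker_neg (α t : ℝ) (n : ℤ) : Kker α t (-n) = Kker α t n := by
  unfold Kker
  congr 1
  have h := intervalIntegral.integral_comp_neg (a := -Real.pi) (b := Real.pi)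
    (fun ξ : ℝ => Complex.exp (Complex.I * ((((n : ℤ) : ℝ) * ξ - sigma1 α ξ * t : ℝ) : ℂ)))
  rw [neg_neg] at h
  rw [← h]
  congr 1; ext ξ
  rw [sigma1_neg]; push_cast; ring_nf

lemma UH_single (α : ℝ) (hα : 0 < α) (t : ℝ) (m n : ℤ) :
    UH α hα t (lp.single 2 m (1 : ℂ)) n = Kker α t (n - m) := by
  rw [UH_apply, HilbertBasis.repr_symm_single, fourierBasis_repr]
  have h1 : fourierCoeff (⇑(Mop α hα t (fourierBasis (T := 2 * Real.pi) m))) n =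
      fourierCoeff (fun x : Circ => mult α t x * fourier m x) n := by
    refine congrFun (fourierCoeff_congr_ae ?_) n
    rw [coe_fourierBasis]
    filter_upwards [Mop_coe α hα t (fourierLp 2 m), coeFn_fourierLp (T := 2 * Real.pi) 2 m] with x h1 h2
    rw [h1, h2]
  rw [h1, fourierCoeff_eq_intervalIntegral _ n (-Real.pi), ← Kker_neg]
  unfold Kker
  rw [show -Real.pi + 2 * Real.pi = Real.pi by ring, one_div]
  congr 1
  congr 1; ext ξ
  rw [fourier_coe_apply, fourier_coe_apply, smul_eq_mul]
  unfold mult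
  rw [sigC_coe, ← Complex.exp_add, ← Complex.exp_add]
  congr 1
  have : (Real.pi : ℂ) ≠ 0 := by exact_mod_cast Real.pi_ne_zero
  push_cast
  field_simp
  ring

lemma Kker_summable_mul (α : ℝ) (hα : 0 < α) (t : ℝ) (x : Hs) (n : ℤ) :
    HasSum (fun m : ℤ => Kker α t (n - m) * x m) (UH α hα t x n) := by
  have h1 := lp.hasSum_single (p := 2) (by norm_num) x
  have h2 := (h1.mapL (UH α hα t).toContinuousLinearMap)
  have h3 := h2.mapL (lp.evalCLM ℂ (fun _ : ℤ => ℂ) 2 n)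
  have e : (fun m : ℤ => Kker α t (n - m) * x m) = fun m : ℤ =>
      lp.evalCLM ℂ (fun _ : ℤ => ℂ) 2 n ((UH α hα t).toContinuousLinearMap (lp.single 2 m (x m))) := by
    ext m
    have : lp.single (E := fun _ : ℤ => ℂ) 2 m (x m) = (x m) • lp.single (E := fun _ : ℤ => ℂ) 2 m (1 : ℂ) := by
      rw [← lp.single_smul]; simp
    rw [this, map_smul, map_smul, smul_eq_mul, mul_comm]
    congr 1
    exact (UH_single α hα t m n).symm
  rw [e]
  exact h3

lemma UH_eq (α : ℝ) (hα : 0 < α) (t : ℝ) (x : Hs) (n : ℤ) :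
    UH α hα t x n = Uprop α t x n := (Kker_summable_mul α hα t x n).tsum_eq.symm

lemma UH_inner (α : ℝ) (hα : 0 < α) (t s : ℝ) (n m : ℤ) :
    inner ℂ (UH α hα (-t) (lp.single 2 n (1 : ℂ))) (UH α hα (-s) (lp.single 2 m (1 : ℂ))) =
      Kker α (t - s) (n - m) := by
  rw [← (UH α hα t).inner_map_map, ← UH_add, ← UH_add, add_neg_cancel, UH_zero, lp.inner_single_left,
    ← sub_eq_add_neg, UH_single]
  simp

/-- testing against the moved delta -/
lemma UH_test (α : ℝ) (hα : 0 < α) (t : ℝ) (n : ℤ) (v : Hs) :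
    inner ℂ (UH α hα (-t) (lp.single 2 n (1 : ℂ))) v = UH α hα t v n := by
  rw [← (UH α hα t).inner_map_map, ← UH_add, add_neg_cancel, UH_zero, lp.inner_single_left]
  simp

lemma Kker_le_one (α t : ℝ) (n : ℤ) : ‖Kker α t n‖ ≤ 1 := by
  unfold Kker
  have h1 : ‖∫ ξ in (-Real.pi)..Real.pi, Complex.exp (Complex.I * (((n : ℝ) * ξ - sigma1 α ξ * t) : ℝ))‖
        ≤ 1 * |Real.pi - -Real.pi| := intervalIntegral.norm_integral_le_of_norm_le_const
          fun x _ => (norm_exp_I_mul_real _).le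
  have hpi := Real.pi_pos
  rw [one_mul, abs_of_pos (by linarith)] at h1
  rw [norm_smul, norm_inv, Real.norm_eq_abs, abs_of_pos (by positivity), inv_mul_le_iff₀ (by positivity)]
  linarith

/-- decay in the form needed for the discrete Strichartz estimate -/
lemma Kker_decay (α : ℝ) (r : ℕ) (C : ℝ) (hC : 0 ≤ C)
    (h : ∀ t : ℝ, t ≠ 0 → ∀ n : ℤ, ‖Kker α t n‖ ≤ C * |t| ^ (-(2 / ((r : ℝ) + 2)))) :
    ∃ A : ℝ, 0 ≤ A ∧ ∀ (i j : ℕ) (θ : ℝ) (n : ℤ),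
      ‖Kker α ((i + θ) - (j + θ)) n‖ ≤ A * kd r (dd i j) := by
  refine ⟨1 + C * 2, by positivity, fun i j θ n => ?_⟩
  rw [show (i + θ) - (j + θ) = (i : ℝ) - j by ring]
  by_cases hij : i = j
  · subst hij
    refine (Kker_le_one _ _ _).trans ?_
    simp [dd, kd]
    linarith
  have hne : (i : ℝ) - j ≠ 0 := sub_ne_zero.2 (by exact_mod_cast hij)
  refine (h _ hne n).trans ?_
  set ρ := 2 / ((r : ℝ) + 2) with hρ
  have hρ0 : 0 ≤ ρ := by positivity
  have hρ1 : ρ ≤ 1 := by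
    rw [hρ, div_le_one (by positivity)]; linarith [Nat.cast_nonneg (α := ℝ) r]
  have hd : ((dd i j : ℕ) : ℝ) = 1 + |(i : ℝ) - j| := by
    unfold dd
    push_cast
    rw [Nat.cast_natAbs]
    push_cast; rfl
  have h1 : 1 ≤ |(i : ℝ) - j| := by
    have : (1 : ℤ) ≤ |(i : ℤ) - j| := Int.one_le_abs (by omega)
    exact_mod_cast this
  have hkd : kd r (dd i j) = (1 + |(i : ℝ) - j|) ^ (-ρ) := by unfold kd; rw [hd]
  rw [hkd]
  have h2 : |(i : ℝ) - j| ^ (-ρ) ≤ 2 * (1 + |(i : ℝ) - j|) ^ (-ρ) := by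
    have h3 : (2 * |(i : ℝ) - j|) ^ (-ρ) ≤ (1 + |(i : ℝ) - j|) ^ (-ρ) :=
      Real.rpow_le_rpow_of_nonpos (by linarith) (by linarith) (by linarith)
    rw [Real.mul_rpow (by norm_num) (by linarith)] at h3
    have h4 : (1 / 2 : ℝ) ≤ 2 ^ (-ρ) := by
      rw [show (1 / 2 : ℝ) = 2 ^ (-1 : ℝ) by rw [Real.rpow_neg_one]; norm_num]
      exact Real.rpow_le_rpow_of_exponent_le (by norm_num) (by linarith)
    have h5 : 0 ≤ |(i : ℝ) - j| ^ (-ρ) := by positivity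
    nlinarith
  have h6 : 0 ≤ (1 + |(i : ℝ) - j|) ^ (-ρ) := by positivity
  nlinarith [mul_le_mul_of_nonneg_left h2 hC]


open scoped NNReal in
lemma ode_global {E : Type*} [NormedAddCommGroup E] [NormedSpace ℝ E] [CompleteSpace E]
    (F : ℝ → E → E) (K L : ℝ≥0) (hK : ∀ t, LipschitzWith K (F t))
    (hc : ∀ x, Continuous (fun t => F t x)) (hL : ∀ t x, ‖F t x‖ ≤ L) (x₀ : E) :
    ∃ v : ℝ → E, v 0 = x₀ ∧ ∀ t, HasDerivAt v (F t (v t)) t := by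
  have key : ∀ N : ℕ, ∃ v : ℝ → E, v 0 = x₀ ∧
      ∀ t ∈ Set.Ioo (-(N:ℝ) - 1) (N + 1), HasDerivAt v (F t (v t)) t := by
    intro N
    have h0 : (0:ℝ) ∈ Set.Icc (-(N:ℝ) - 1) (N + 1) := by
      constructor <;> linarith [(Nat.cast_nonneg N : (0:ℝ) ≤ N)]
    have hP : IsPicardLindelof F (⟨0, h0⟩ : Set.Icc (-(N:ℝ) - 1) (N + 1)) x₀
        (L * (N + 1)) 0 L K := by
      refine ⟨fun t _ => (hK t).lipschitzOnWith, fun x _ => (hc x).continuousOn,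
        fun t _ x _ => hL t x, ?_⟩
      have : max ((N:ℝ) + 1 - 0) (0 - (-(N:ℝ) - 1)) = N + 1 := by
        rw [max_eq_left] <;> linarith
      simp only [this]
      push_cast
      simp
    obtain ⟨v, hv0, hv⟩ := hP.exists_eq_forall_mem_Icc_hasDerivWithinAt₀
    refine ⟨v, hv0, fun t ht => (hv t (Set.Ioo_subset_Icc_self ht)).hasDerivAt
      (Icc_mem_nhds ht.1 ht.2)⟩
  choose v hv0 hv using key
  have huniq : ∀ N M : ℕ, N ≤ M → ∀ t ∈ Set.Ioo (-(N:ℝ) - 1) (N + 1), v N t = v M t := by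
    intro N M hNM t ht
    have hcast : (N:ℝ) ≤ M := by exact_mod_cast hNM
    have := @ODE_solution_unique_of_mem_Ioo E _ _ F (fun _ => Set.univ) K (v N) (v M)
      (-(N:ℝ) - 1) (N + 1) 0 (fun t _ => (hK t).lipschitzOnWith)
      (by constructor <;> linarith [(Nat.cast_nonneg N : (0:ℝ) ≤ N)])
      (fun t ht => ⟨hv N t ht, trivial⟩)
      (fun t ht => ⟨hv M t ⟨by linarith [ht.1], by linarith [ht.2]⟩, trivial⟩)
      (by rw [hv0, hv0])
    exact this ht
  have hmem : ∀ t : ℝ, t ∈ Set.Ioo (-((⌈|t|⌉₊ : ℕ):ℝ) - 1) ((⌈|t|⌉₊ : ℕ) + 1) := by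
    intro t
    have := Nat.le_ceil |t|
    have := abs_le.1 this
    constructor <;> linarith
  have hglob : ∀ (N : ℕ) (t : ℝ), t ∈ Set.Ioo (-(N:ℝ) - 1) (N + 1) →
      v (⌈|t|⌉₊) t = v N t := by
    intro N t ht
    rcases le_total N (⌈|t|⌉₊) with h | h
    · exact (huniq _ _ h t ht).symm
    · exact huniq _ _ h t (hmem t)
  refine ⟨fun t => v (⌈|t|⌉₊) t, by simp [hv0], fun t => ?_⟩
  refine (hv _ t (hmem t)).congr_of_eventuallyEq ?_
  filter_upwards [Ioo_mem_nhds (hmem t).1 (hmem t).2] with s hs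
  exact hglob _ s hs

/-- The pointwise nonlinearity. -/
def gnl (p : ℝ) (z : ℂ) : ℂ := ((‖z‖ ^ (p - 1) : ℝ) : ℂ) * z

lemma gnl_norm (p : ℝ) (z : ℂ) : ‖gnl p z‖ = ‖z‖ ^ (p - 1) * ‖z‖ := by
  unfold gnl
  rw [norm_mul, Complex.norm_real, Real.norm_of_nonneg (by positivity)]

lemma rpow_lip (q : ℝ) (hq : 1 ≤ q) (a b : ℝ) (ha : 0 ≤ a) (hab : a ≤ b) (hb : b ≤ 1) :
    b ^ q - a ^ q ≤ q * (b - a) := by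
  have h := (convex_Icc (0:ℝ) 1).norm_image_sub_le_of_norm_hasDerivWithin_le
    (f := fun x : ℝ => x ^ q) (f' := fun x => q * x ^ (q-1)) (C := q) (x := a) (y := b)
    (fun x hx => (Real.hasDerivAt_rpow_const (Or.inr hq)).hasDerivWithinAt)
    (fun x hx => by
      rw [Real.norm_of_nonneg (by have := hx.1; positivity)]
      have := Real.rpow_le_one hx.1 hx.2 (by linarith : 0 ≤ q - 1)
      nlinarith) ⟨ha, by linarith⟩ ⟨by linarith, hb⟩
  rw [Real.norm_of_nonneg (by linarith : 0 ≤ b - a)] at h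
  exact le_trans (le_abs_self _) h

lemma gnl_lip_aux (p : ℝ) (hp : 2 ≤ p) (z w : ℂ) (hw : ‖w‖ ≤ 1) (h : ‖z‖ ≤ ‖w‖) :
    ‖gnl p w - gnl p z‖ ≤ p * ‖w - z‖ := by
  have h1 := rpow_lip (p-1) (by linarith) ‖z‖ ‖w‖ (norm_nonneg _) h hw
  have h3 : ‖w‖ - ‖z‖ ≤ ‖w - z‖ := norm_sub_norm_le _ _
  have h2 : gnl p w - gnl p z = ((‖w‖ ^ (p - 1) : ℝ) : ℂ) * (w - z)
      + ((‖w‖ ^ (p - 1) - ‖z‖ ^ (p-1) : ℝ) : ℂ) * z := by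
    unfold gnl; push_cast; ring
  rw [h2]
  refine (norm_add_le _ _).trans ?_
  have hm : ‖z‖ ^ (p-1) ≤ ‖w‖ ^ (p-1) := Real.rpow_le_rpow (norm_nonneg _) h (by linarith)
  rw [norm_mul, norm_mul, Complex.norm_real, Complex.norm_real, Real.norm_of_nonneg (by positivity),
    Real.norm_of_nonneg (by linarith)]
  have h5 : ‖w‖ ^ (p-1) ≤ 1 := Real.rpow_le_one (norm_nonneg _) hw (by linarith)
  have h4 : ‖z‖ ≤ 1 := h.trans hw
  have e1 : ‖w‖ ^ (p-1) * ‖w - z‖ ≤ 1 * ‖w - z‖ := by gcongr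
  have e2 : (‖w‖ ^ (p-1) - ‖z‖ ^ (p-1)) * ‖z‖ ≤ ((p-1) * ‖w - z‖) * 1 := by
    have e3 : (p - 1) * (‖w‖ - ‖z‖) ≤ (p-1) * ‖w - z‖ :=
      mul_le_mul_of_nonneg_left h3 (by linarith)
    apply mul_le_mul (by linarith) h4 (norm_nonneg _)
    have := norm_nonneg (w - z)
    nlinarith
  linarith

lemma gnl_lip (p : ℝ) (hp : 2 ≤ p) (z w : ℂ) (hz : ‖z‖ ≤ 1) (hw : ‖w‖ ≤ 1) :
    ‖gnl p w - gnl p z‖ ≤ p * ‖w - z‖ := by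
  rcases le_total ‖z‖ ‖w‖ with h | h
  · exact gnl_lip_aux p hp z w hw h
  · rw [norm_sub_rev, norm_sub_rev w z]; exact gnl_lip_aux p hp w z hz h

lemma lp_pt_le (x : Hs) (n : ℤ) : ‖x n‖ ≤ ‖x‖ :=
  lp.norm_apply_le_norm (by norm_num) x n

/-- pointwise domination gives membership and norm bound -/
lemma memlp_dom (g : ℤ → ℂ) (y : Hs) (h : ∀ n, ‖g n‖ ≤ ‖y n‖) : Memℓp g 2 := by
  have h2 : 0 < (2 : ℝ≥0∞).toReal := by norm_num
  refine memℓp_gen (Summable.of_nonneg_of_le (fun n => by positivity) (fun n => ?_)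
    ((lp.memℓp y).summable h2))
  exact Real.rpow_le_rpow (norm_nonneg _) (h n) h2.le

lemma G_mem (p : ℝ) (hp : 2 ≤ p) (x : Hs) : Memℓp (fun n => gnl p (x n)) 2 := by
  refine memlp_dom _ (((‖x‖ ^ (p-1) : ℝ) : ℂ) • x) fun n => ?_
  rw [gnl_norm]
  show _ ≤ ‖((‖x‖ ^ (p-1) : ℝ) : ℂ) * x n‖
  rw [norm_mul, Complex.norm_real, Real.norm_of_nonneg (by positivity)]
  gcongr
  · linarith
  · exact lp_pt_le x n

def G (p : ℝ) (hp : 2 ≤ p) (x : Hs) : Hs := ⟨fun n => gnl p (x n), G_mem p hp x⟩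

lemma G_apply (p : ℝ) (hp : 2 ≤ p) (x : Hs) (n : ℤ) : G p hp x n = gnl p (x n) := rfl

lemma G_norm_le (p : ℝ) (hp : 2 ≤ p) (x : Hs) (s : ℝ) (hs : 0 ≤ s) (h : ∀ n, ‖x n‖ ≤ s) :
    ‖G p hp x‖ ≤ s ^ (p-1) * ‖x‖ := by
  have h1 : ‖G p hp x‖ ≤ ‖((s ^ (p-1) : ℝ) : ℂ) • x‖ := by
    refine lp.norm_mono (by norm_num) fun n => ?_
    rw [G_apply, gnl_norm]
    show _ ≤ ‖((s ^ (p-1) : ℝ) : ℂ) * x n‖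
    rw [norm_mul, Complex.norm_real, Real.norm_of_nonneg (by positivity)]
    gcongr
    · linarith
    · exact h n
  rwa [norm_smul, Complex.norm_real, Real.norm_of_nonneg (by positivity)] at h1

lemma G_lip (p : ℝ) (hp : 2 ≤ p) (x y : Hs) (hx : ‖x‖ ≤ 1) (hy : ‖y‖ ≤ 1) :
    ‖G p hp x - G p hp y‖ ≤ p * ‖x - y‖ := by
  have h1 : ‖G p hp x - G p hp y‖ ≤ ‖(p : ℂ) • (x - y)‖ := by
    refine lp.norm_mono (by norm_num) fun n => ?_
    show ‖gnl p (x n) - gnl p (y n)‖ ≤ ‖(p:ℂ) * (x n - y n)‖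
    rw [norm_mul, Complex.norm_real, Real.norm_of_nonneg (by linarith)]
    exact gnl_lip p hp _ _ ((lp_pt_le y n).trans hy) ((lp_pt_le x n).trans hx)
  rwa [norm_smul, Complex.norm_real, Real.norm_of_nonneg (by linarith)] at h1

/-- Radial retraction onto the unit ball. -/
def Pr (v : Hs) : Hs := (((max 1 ‖v‖)⁻¹ : ℝ) : ℂ) • v

lemma Pr_norm (v : Hs) : ‖Pr v‖ ≤ 1 := by
  unfold Pr
  have h : (0:ℝ) < max 1 ‖v‖ := by positivity
  rw [norm_smul, Complex.norm_real, Real.norm_of_nonneg (by positivity), inv_mul_le_iff₀ h]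
  simp

lemma Pr_of_le (v : Hs) (h : ‖v‖ ≤ 1) : Pr v = v := by
  unfold Pr
  rw [max_eq_left h]; simp

lemma Pr_lip (v w : Hs) : ‖Pr v - Pr w‖ ≤ 2 * ‖v - w‖ := by
  have key : ∀ v w : Hs, ‖v‖ ≤ ‖w‖ → ‖Pr v - Pr w‖ ≤ 2 * ‖v - w‖ := by
    intro v w hvw
    set a := max 1 ‖v‖ with ha
    set b := max 1 ‖w‖ with hb
    have ha1 : 1 ≤ a := le_max_left _ _
    have hb1 : 1 ≤ b := le_max_left _ _
    have hab : a ≤ b := max_le_max le_rfl hvw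
    have hva : ‖v‖ ≤ a := le_max_right _ _
    have hba : b - a ≤ ‖v - w‖ := by
      have : ‖w‖ - ‖v‖ ≤ ‖v - w‖ := by rw [norm_sub_rev]; exact norm_sub_norm_le _ _
      rcases le_total 1 ‖w‖ with h | h
      · rw [hb, max_eq_right h]; linarith [le_max_right 1 ‖v‖]
      · rw [hb, max_eq_left h]; linarith [norm_nonneg (v - w)]
    have e : Pr v - Pr w = ((b⁻¹ : ℝ) : ℂ) • (v - w) + ((a⁻¹ - b⁻¹ : ℝ) : ℂ) • v := by
      unfold Pr
      rw [← ha, ← hb]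
      push_cast
      module
    rw [e]
    refine (norm_add_le _ _).trans ?_
    have hi : b⁻¹ ≤ a⁻¹ := inv_anti₀ (by linarith) hab
    rw [norm_smul, norm_smul, Complex.norm_real, Complex.norm_real,
      Real.norm_of_nonneg (by positivity), Real.norm_of_nonneg (by linarith)]
    have h1 : b⁻¹ ≤ 1 := inv_le_one_of_one_le₀ hb1
    have h2 : (a⁻¹ - b⁻¹) * ‖v‖ ≤ (a⁻¹ - b⁻¹) * a := by
      apply mul_le_mul_of_nonneg_left hva; linarith
    have h3 : (a⁻¹ - b⁻¹) * a = b⁻¹ * (b - a) := by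
      field_simp
    have h4 : b⁻¹ * (b - a) ≤ 1 * ‖v - w‖ := by
      apply mul_le_mul h1 hba (by linarith) (by norm_num)
    have h5 : b⁻¹ * ‖v - w‖ ≤ 1 * ‖v - w‖ := by gcongr
    linarith
  rcases le_total ‖v‖ ‖w‖ with h | h
  · exact key v w h
  · rw [norm_sub_rev, norm_sub_rev v w]; exact key w v h

lemma UH_cont (α : ℝ) (hα : 0 < α) (y : ℝ → Hs) (hy : Continuous y) (τ : ℝ → ℝ)
    (hτ : Continuous τ) :
    Continuous (fun t => UH α hα (τ t) (y t)) := by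
  rw [continuous_iff_continuousAt]
  intro t
  rw [ContinuousAt, tendsto_iff_norm_sub_tendsto_zero]
  refine squeeze_zero (g := fun s => ‖y s - y t‖ + sigBound α * |τ s - τ t| * ‖y t‖)
    (fun _ => norm_nonneg _) (fun s => ?_) ?_
  · have e : UH α hα (τ s) (y s) - UH α hα (τ t) (y t) =
      UH α hα (τ s) (y s - y t) + (UH α hα (τ s) (y t) - UH α hα (τ t) (y t)) := by
      rw [map_sub]; abel
    rw [e]
    refine (norm_add_le _ _).trans ?_
    rw [LinearIsometry.norm_map]
    gcongr
    exact UH_lip α hα _ _ _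
  · have : Continuous (fun s => ‖y s - y t‖ + sigBound α * |τ s - τ t| * ‖y t‖) := by fun_prop
    have h := this.tendsto t
    simpa using h

/-- The truncated field. -/
def Ft (α : ℝ) (hα : 0 < α) (p : ℝ) (hp : 2 ≤ p) (t : ℝ) (v : Hs) : Hs :=
  Complex.I • UH α hα (-t) (G p hp (UH α hα t (Pr v)))

lemma Ft_norm (α : ℝ) (hα : 0 < α) (p : ℝ) (hp : 2 ≤ p) (t : ℝ) (v : Hs) :
    ‖Ft α hα p hp t v‖ ≤ 1 := by
  unfold Ft
  rw [norm_smul, LinearIsometry.norm_map, Complex.norm_I, one_mul]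
  have h : ‖UH α hα t (Pr v)‖ ≤ 1 := by rw [LinearIsometry.norm_map]; exact Pr_norm v
  have := G_norm_le p hp (UH α hα t (Pr v)) 1 zero_le_one (fun n => (lp_pt_le _ n).trans h)
  rw [Real.one_rpow, one_mul] at this
  exact this.trans h

lemma Ft_lip (α : ℝ) (hα : 0 < α) (p : ℝ) (hp : 2 ≤ p) (t : ℝ) :
    LipschitzWith (2 * p).toNNReal (Ft α hα p hp t) := by
  apply LipschitzWith.of_dist_le_mul
  intro v w
  rw [dist_eq_norm, dist_eq_norm, Real.coe_toNNReal _ (by linarith)]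
  unfold Ft
  rw [← smul_sub, ← map_sub, norm_smul, LinearIsometry.norm_map, Complex.norm_I, one_mul]
  have h : ∀ v, ‖UH α hα t (Pr v)‖ ≤ 1 := fun v => by
    rw [LinearIsometry.norm_map]; exact Pr_norm v
  refine (G_lip p hp _ _ (h v) (h w)).trans ?_
  rw [← map_sub, LinearIsometry.norm_map]
  have := Pr_lip v w
  nlinarith

lemma G_cont (p : ℝ) (hp : 2 ≤ p) (y : ℝ → Hs) (hy : Continuous y) (h1 : ∀ t, ‖y t‖ ≤ 1) :
    Continuous (fun t => G p hp (y t)) := by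
  rw [continuous_iff_continuousAt]
  intro t
  rw [ContinuousAt, tendsto_iff_norm_sub_tendsto_zero]
  refine squeeze_zero (g := fun s => p * ‖y s - y t‖)
    (fun _ => norm_nonneg _) (fun s => G_lip p hp _ _ (h1 s) (h1 t)) ?_
  have : Continuous (fun s => p * ‖y s - y t‖) := by fun_prop
  simpa using this.tendsto t

lemma Ft_cont (α : ℝ) (hα : 0 < α) (p : ℝ) (hp : 2 ≤ p) (v : Hs) :
    Continuous (fun t => Ft α hα p hp t v) := by
  unfold Ft
  refine Continuous.const_smul ?_ Complex.I
  refine UH_cont α hα (fun t => G p hp (UH α hα t (Pr v))) ?_ (fun t => -t) continuous_neg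
  refine G_cont p hp (fun t => UH α hα t (Pr v)) ?_ ?_
  · exact UH_cont α hα _ continuous_const _ continuous_id
  · intro t; rw [LinearIsometry.norm_map]; exact Pr_norm v

lemma UH_inv (α : ℝ) (hα : 0 < α) (t : ℝ) (x : Hs) : UH α hα t (UH α hα (-t) x) = x := by
  rw [← UH_add, add_neg_cancel, UH_zero]

lemma inner_G (p : ℝ) (hp : 2 ≤ p) (c : ℝ) (x : Hs) :
    (inner ℂ x (Complex.I • G p hp ((c:ℂ) • x))).re = 0 := by
  rw [inner_smul_right, lp.inner_eq_tsum]
  have : ∀ n, inner ℂ (x n) (G p hp ((c:ℂ) • x) n) =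
      (((‖(c:ℂ) * x n‖ ^ (p-1) * c * ‖x n‖^2 : ℝ)) : ℂ) := by
    intro n
    rw [G_apply]
    show inner ℂ (x n) (gnl p ((c:ℂ) * x n)) = _
    unfold gnl
    simp only [RCLike.inner_apply]
    have := Complex.mul_conj' (x n)
    simp only [Complex.ofReal_mul, Complex.ofReal_pow]
    rw [← this]
    ring
  rw [tsum_congr this, ← Complex.ofReal_tsum]
  simp

lemma exists_solution (α : ℝ) (hα : 0 < α) (p : ℝ) (hp : 2 ≤ p) (φ : Hs) (hφ : ‖φ‖ ≤ 1) :
    ∃ v : ℝ → Hs, v 0 = φ ∧ (∀ t, ‖v t‖ = ‖φ‖) ∧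
      (∀ t, HasDerivAt v (Complex.I • UH α hα (-t) (G p hp (UH α hα t (v t)))) t) := by
  obtain ⟨v, hv0, hv⟩ := ode_global (Ft α hα p hp) (2*p).toNNReal 1 (Ft_lip α hα p hp)
    (Ft_cont α hα p hp) (fun t x => by simpa using Ft_norm α hα p hp t x) φ
  have hre : ∀ t, (inner ℂ (v t) (Ft α hα p hp t (v t))).re = 0 := by
    intro t
    rw [← LinearIsometry.inner_map_map (UH α hα t)]
    unfold Ft
    rw [map_smul, UH_inv, Pr, map_smul]
    exact inner_G p hp _ _
  have hder : ∀ t, HasDerivAt (fun t => inner ℂ (v t) (v t)) 0 t := by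
    intro t
    have h := HasDerivAt.inner ℂ (hv t) (hv t)
    have h1 := hre t
    have h2 : inner ℂ (v t) (Ft α hα p hp t (v t)) + inner ℂ (Ft α hα p hp t (v t)) (v t) = 0 := by
      rw [← inner_conj_symm (Ft α hα p hp t (v t)) (v t), Complex.add_conj, h1]
      simp
    rw [h2] at h
    exact h
  have hconst : ∀ t, inner ℂ (v t) (v t) = inner ℂ φ φ := by
    intro t
    have := is_const_of_deriv_eq_zero (f := fun t => inner ℂ (v t) (v t))
      (fun t => (hder t).differentiableAt) (fun t => (hder t).deriv) t 0
    simpa [hv0] using this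
  have hn : ∀ t, ‖v t‖ = ‖φ‖ := by
    intro t
    have := hconst t
    rw [inner_self_eq_norm_sq_to_K, inner_self_eq_norm_sq_to_K] at this
    have h2 : ‖v t‖^2 = ‖φ‖^2 := by exact_mod_cast this
    exact (sq_eq_sq₀ (norm_nonneg _) (norm_nonneg _)).1 h2
  refine ⟨v, hv0, hn, fun t => ?_⟩
  have := hv t
  unfold Ft at this
  rwa [Pr_of_le _ (by rw [hn]; exact hφ)] at this


lemma Kker_decay2 (α : ℝ) (r : ℕ) (C : ℝ) (hC : 0 ≤ C)
    (h : ∀ t : ℝ, t ≠ 0 → ∀ n : ℤ, ‖Kker α t n‖ ≤ C * |t| ^ (-(2 / ((r : ℝ) + 2)))) :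
    ∃ A : ℝ, 0 ≤ A ∧ ∀ (i j : ℕ) (t s : ℝ) (n : ℤ), t ∈ Set.Icc (i:ℝ) (i+1) →
      s ∈ Set.Icc (j:ℝ) (j+1) → ‖Kker α (t - s) n‖ ≤ A * kd r (dd i j) := by
  refine ⟨3 + C * 3, by positivity, fun i j t s n ht hs => ?_⟩
  set ρ := 2 / ((r : ℝ) + 2) with hρ
  have hρ0 : 0 ≤ ρ := by positivity
  have hρ1 : ρ ≤ 1 := by
    rw [hρ, div_le_one (by positivity)]; linarith [Nat.cast_nonneg (α := ℝ) r]
  have hd : ((dd i j : ℕ) : ℝ) = 1 + |(i : ℝ) - j| := by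
    unfold dd
    push_cast
    rw [Nat.cast_natAbs]
    push_cast; rfl
  have hkd : kd r (dd i j) = (dd i j : ℝ) ^ (-ρ) := by unfold kd; rfl
  have h4 : (1 / 3 : ℝ) ≤ 3 ^ (-ρ) := by
    rw [show (1 / 3 : ℝ) = 3 ^ (-1 : ℝ) by rw [Real.rpow_neg_one]; norm_num]
    exact Real.rpow_le_rpow_of_exponent_le (by norm_num) (by linarith)
  have hk0 := kd_nonneg r (dd i j)
  have hd1 : 1 ≤ dd i j := by unfold dd; omega
  have hd1' : (1:ℝ) ≤ dd i j := by exact_mod_cast hd1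
  by_cases hsm : dd i j ≤ 2
  · refine (Kker_le_one _ _ _).trans ?_
    have h2 : (dd i j : ℝ) ≤ 3 := by exact_mod_cast (by omega : dd i j ≤ 3)
    have h3 : (3:ℝ) ^ (-ρ) ≤ (dd i j : ℝ) ^ (-ρ) :=
      Real.rpow_le_rpow_of_nonpos (by linarith) h2 (by linarith)
    rw [← hkd] at h3
    nlinarith [mul_nonneg hC hk0]
  · have hd3 : (3:ℝ) ≤ dd i j := by exact_mod_cast (by omega : 3 ≤ dd i j)
    have hts : (dd i j : ℝ) / 3 ≤ |t - s| := by
      have : (dd i j : ℝ) - 2 ≤ |t - s| := by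
        rw [hd]
        rcases abs_cases ((i:ℝ) - j) with h | h <;> rcases abs_cases (t - s) with h' | h' <;>
          linarith [ht.1, ht.2, hs.1, hs.2, h.1, h.2, h'.1, h'.2]
      linarith
    have hne : t - s ≠ 0 := by
      intro h0; rw [h0] at hts; simp at hts; linarith
    refine (h _ hne n).trans ?_
    have h5 : |t - s| ^ (-ρ) ≤ ((dd i j : ℝ) / 3) ^ (-ρ) :=
      Real.rpow_le_rpow_of_nonpos (by linarith) hts (by linarith)
    have h6 : (3:ℝ) ^ (-ρ) * ((dd i j : ℝ) / 3) ^ (-ρ) = kd r (dd i j) := by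
      rw [hkd, ← Real.mul_rpow (by norm_num) (by linarith)]
      congr 1; ring
    have h7 : 0 ≤ ((dd i j : ℝ) / 3) ^ (-ρ) := by positivity
    have h8 : |t - s| ^ (-ρ) ≤ 3 * kd r (dd i j) := by nlinarith
    nlinarith [mul_le_mul_of_nonneg_left h8 hC]

lemma strich_sum {H : Type*} [NormedAddCommGroup H] [InnerProductSpace ℂ H]
    (r : ℕ) (hr : 2 ≤ r) (N : ℕ) (f : ℕ → ℝ) (hf : ∀ j, 0 ≤ f j) (s : ℝ)
    (hs : 0 ≤ s) (hS : ∑ j ∈ Finset.range (N+1), f j ^ (r + 2) = s ^ (r + 2))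
    (A : ℝ) (hA : 0 ≤ A) (e w : ℕ → H)
    (he : ∀ i j, ‖inner ℂ (e i) (e j)‖ ≤ A * kd r (dd i j))
    (hfw : ∀ j, f j ≤ 2 * ‖inner ℂ (e j) (w j)‖) :
    s ≤ 2 * Real.sqrt (18 * A) * (‖w 0‖ + ∑ k ∈ Finset.range N, ‖w (k+1) - w k‖) := by
  set B := ‖w 0‖ + ∑ k ∈ Finset.range N, ‖w (k+1) - w k‖ with hB
  have hB0 : 0 ≤ B := by positivity
  set z : ℕ → ℂ := fun j => inner ℂ (e j) (w j) with hz
  set c : ℕ → ℂ := fun j => ((f j ^ (r+1) / ‖z j‖ : ℝ) : ℂ) * z j with hc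
  have hcn : ∀ j, ‖c j‖ ≤ f j ^ (r+1) := by
    intro j
    have := hf j
    simp only [hc]
    rw [norm_mul, Complex.norm_real, Real.norm_of_nonneg (by positivity)]
    by_cases h0 : ‖z j‖ = 0
    · rw [h0]; simp; positivity
    · rw [div_mul_cancel₀ _ h0]
  have hci : ∀ j, inner ℂ (c j • e j) (w j) = ((f j ^ (r+1) * ‖z j‖ : ℝ) : ℂ) := by
    intro j
    rw [inner_smul_left]
    simp only [hc, map_mul, Complex.conj_ofReal]
    change _ * z j = _
    rw [mul_assoc, Complex.conj_mul']
    by_cases h0 : ‖z j‖ = 0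
    · rw [h0]; simp
    · push_cast
      have : (‖z j‖ : ℂ) ≠ 0 := by exact_mod_cast h0
      field_simp
  have hw : ∀ j ∈ Finset.range (N+1), w j = w 0 + ∑ k ∈ Finset.range N,
      if k < j then w (k+1) - w k else 0 := by
    intro j hj
    rw [← Finset.sum_filter]
    have : (Finset.range N).filter (fun k => k < j) = Finset.range j := by
      ext k; simp at hj ⊢; omega
    rw [this, Finset.sum_range_sub]; abel
  have hsum : ∑ j ∈ Finset.range (N+1), inner ℂ (c j • e j) (w j) =
      inner ℂ (∑ j ∈ Finset.range (N+1), c j • e j) (w 0) +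
      ∑ k ∈ Finset.range N, inner ℂ (∑ j ∈ Finset.range (N+1), (if k < j then c j else 0) • e j)
        (w (k+1) - w k) := by
    have h1 : ∀ j ∈ Finset.range (N+1), inner ℂ (c j • e j) (w j) = inner ℂ (c j • e j) (w 0) +
        ∑ k ∈ Finset.range N, inner ℂ ((if k < j then c j else 0) • e j) (w (k+1) - w k) := by
      intro j hj
      conv_lhs => rw [hw j hj]
      rw [inner_add_right, inner_sum]
      congr 1
      refine Finset.sum_congr rfl fun k _ => ?_
      split_ifs
      · rfl
      · rw [inner_zero_right, zero_smul, inner_zero_left]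
    rw [Finset.sum_congr rfl h1, Finset.sum_add_distrib, sum_inner, Finset.sum_comm]
    congr 1
    refine Finset.sum_congr rfl fun k _ => ?_
    rw [sum_inner]
  set Q := Real.sqrt (18 * A) with hQ
  have hQ0 : 0 ≤ Q := Real.sqrt_nonneg _
  have hbd : ‖∑ j ∈ Finset.range (N+1), inner ℂ (c j • e j) (w j)‖ ≤ Q * s ^ (r+1) * B := by
    rw [hsum, hB, mul_add, Finset.mul_sum]
    refine (norm_add_le _ _).trans (add_le_add ?_ ((norm_sum_le _ _).trans
      (Finset.sum_le_sum fun k _ => ?_)))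
    · refine (norm_inner_le_norm _ _).trans ?_
      gcongr
      exact dual_strichartz r hr (N+1) f hf s hs hS A hA e he c hcn
    · refine (norm_inner_le_norm _ _).trans ?_
      gcongr
      refine dual_strichartz r hr (N+1) f hf s hs hS A hA e he _ fun j => ?_
      have := hf j
      split_ifs
      · exact hcn j
      · simp; positivity
  have hlow : s ^ (r+2) ≤ 2 * ‖∑ j ∈ Finset.range (N+1), inner ℂ (c j • e j) (w j)‖ := by
    rw [Finset.sum_congr rfl (fun j _ => hci j), ← Complex.ofReal_sum, Complex.norm_real]
    refine le_trans ?_ (mul_le_mul_of_nonneg_left (le_abs_self _) (by norm_num))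
    rw [← hS, Finset.mul_sum]
    refine Finset.sum_le_sum fun j _ => ?_
    have h1 := mul_le_mul_of_nonneg_left (hfw j) (pow_nonneg (hf j) (r+1))
    change _ ≤ 2 * (f j ^ (r+1) * ‖inner ℂ (e j) (w j)‖)
    calc f j ^ (r+2) = f j ^ (r+1) * f j := by ring
      _ ≤ _ := h1
      _ = _ := by ring
  rcases hs.eq_or_lt with h0 | h0
  · rw [← h0]; positivity
  · have h1 : s ^ (r+1) * s ≤ s ^ (r+1) * (2 * Q * B) := by
      calc s ^ (r+1) * s = s^(r+2) := by ring
        _ ≤ 2 * (Q * s ^ (r+1) * B) := hlow.trans (by linarith)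
        _ = _ := by ring
    exact le_of_mul_le_mul_left h1 (by positivity)

/-- Block sup norm. -/
def bs (u : ℝ → Hs) (k : ℕ) : ℝ := ⨆ x : Set.Icc (k:ℝ) (k+1) × ℤ, ‖u x.1 x.2‖

lemma bs_bdd (u : ℝ → Hs) (a : ℝ) (hu : ∀ t, ‖u t‖ ≤ a) (k : ℕ) :
    BddAbove (Set.range fun x : Set.Icc (k:ℝ) (k+1) × ℤ => ‖u x.1 x.2‖) :=
  ⟨a, by rintro _ ⟨x, rfl⟩; exact (lp_pt_le _ _).trans (hu _)⟩

lemma bs_nonneg (u : ℝ → Hs) (k : ℕ) : 0 ≤ bs u k := Real.iSup_nonneg fun _ => norm_nonneg _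

lemma bs_le (u : ℝ → Hs) (a : ℝ) (ha : 0 ≤ a) (hu : ∀ t, ‖u t‖ ≤ a) (k : ℕ) : bs u k ≤ a :=
  Real.iSup_le (fun _ => (lp_pt_le _ _).trans (hu _)) ha

lemma le_bs (u : ℝ → Hs) (a : ℝ) (hu : ∀ t, ‖u t‖ ≤ a) (k : ℕ) (t : ℝ)
    (ht : t ∈ Set.Icc (k:ℝ) (k+1)) (n : ℤ) : ‖u t n‖ ≤ bs u k :=
  le_ciSup (bs_bdd u a hu k) (⟨t, ht⟩, n)

lemma bs_choose (u : ℝ → Hs) (k : ℕ) :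
    ∃ t ∈ Set.Icc (k:ℝ) (k+1), ∃ n : ℤ, bs u k ≤ 2 * ‖u t n‖ := by
  have : Nonempty (Set.Icc (k:ℝ) (k+1)) := ⟨⟨k, by simp⟩⟩
  rcases (bs_nonneg u k).eq_or_lt with h | h
  · exact ⟨k, by simp, 0, by rw [← h]; positivity⟩
  · obtain ⟨x, hx⟩ := exists_lt_of_lt_ciSup (show bs u k / 2 < bs u k by linarith)
    exact ⟨x.1, x.1.2, x.2, by linarith⟩

lemma bootstrap (α : ℝ) (hα : 0 < α) (p : ℝ) (hp : 2 ≤ p) (r : ℕ) (hr : 2 ≤ r)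
    (hpr : (r:ℝ) + 3 ≤ p) (A : ℝ) (hA : 0 ≤ A)
    (hdec : ∀ (i j : ℕ) (t s : ℝ) (n : ℤ), t ∈ Set.Icc (i:ℝ) (i+1) →
      s ∈ Set.Icc (j:ℝ) (j+1) → ‖Kker α (t - s) n‖ ≤ A * kd r (dd i j))
    (φ : Hs) (h1 : ‖φ‖ ≤ 1 / 2) (h2 : 2 * Real.sqrt (18 * A) * (3 * ‖φ‖) ≤ 1 / 2)
    (v : ℝ → Hs) (hn : ∀ t, ‖v t‖ = ‖φ‖)
    (hv : ∀ t, HasDerivAt v (Complex.I • UH α hα (-t) (G p hp (UH α hα t (v t)))) t) :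
    ∃ vp : Hs, Tendsto v atTop (𝓝 vp) := by
  set u : ℝ → Hs := fun t => UH α hα t (v t) with hu
  have hun : ∀ t, ‖u t‖ ≤ ‖φ‖ := fun t => by simp only [hu]; rw [LinearIsometry.norm_map, hn]
  set f := bs u with hf
  have hf0 : ∀ k, 0 ≤ f k := bs_nonneg u
  have hf1 : ∀ k, f k ≤ ‖φ‖ := bs_le u _ (norm_nonneg _) hun
  -- derivative bound
  have hF : ∀ (k : ℕ) (t : ℝ), t ∈ Set.Icc (k:ℝ) (k+1) →
      ‖Complex.I • UH α hα (-t) (G p hp (UH α hα t (v t)))‖ ≤ ‖φ‖ * f k ^ (r+2) := by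
    intro k t ht
    rw [norm_smul, LinearIsometry.norm_map, Complex.norm_I, one_mul]
    refine (G_norm_le p hp (u t) (f k) (hf0 k) (le_bs u _ hun k t ht)).trans ?_
    rw [mul_comm ‖φ‖]
    have h3 : f k ^ (p-1) ≤ f k ^ (r+2) := by
      rw [← Real.rpow_natCast]
      apply Real.rpow_le_rpow_of_exponent_ge' (hf0 k) ((hf1 k).trans (by linarith)) (by positivity)
      push_cast; linarith
    exact mul_le_mul h3 (hun t) (norm_nonneg _) (by have := hf0 k; positivity)
  have hmv : ∀ (k : ℕ) (t s : ℝ), t ∈ Set.Icc (k:ℝ) (k+1) → s ∈ Set.Icc (k:ℝ) (k+1) →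
      ‖v s - v t‖ ≤ ‖φ‖ * f k ^ (r+2) := by
    intro k t s ht hs
    have h := (convex_Icc (k:ℝ) (k+1)).norm_image_sub_le_of_norm_hasDerivWithin_le
      (fun x _ => (hv x).hasDerivWithinAt) (hF k) ht hs
    refine h.trans ?_
    have h3 : ‖s - t‖ ≤ 1 := by
      rw [Real.norm_eq_abs, abs_le]; constructor <;> linarith [ht.1, ht.2, hs.1, hs.2]
    have : 0 ≤ ‖φ‖ * f k ^ (r+2) := by have := hf0 k; positivity
    nlinarith
  choose τ hτ ν hν using bs_choose u
  have hstep : ∀ N : ℕ, ∑ k ∈ Finset.range N, ‖v (τ (k+1)) - v (τ k)‖ ≤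
      2 * ‖φ‖ * ∑ j ∈ Finset.range (N+1), f j ^ (r+2) := by
    intro N
    have h3 : ∀ k, ‖v (τ (k+1)) - v (τ k)‖ ≤ ‖φ‖ * f (k+1) ^ (r+2) + ‖φ‖ * f k ^ (r+2) := by
      intro k
      have e : v (τ (k+1)) - v (τ k) = (v (τ (k+1)) - v (k+1)) + (v (k+1) - v (τ k)) := by abel
      rw [e]
      refine (norm_add_le _ _).trans (add_le_add (hmv (k+1) _ _ ?_ (hτ (k+1)))
        (hmv k _ _ (hτ k) ?_))
      · push_cast; simp
      · simp
    refine (Finset.sum_le_sum fun k _ => h3 k).trans ?_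
    rw [Finset.sum_add_distrib, ← Finset.mul_sum, ← Finset.mul_sum]
    have h4 : ∑ k ∈ Finset.range N, f (k+1) ^ (r+2) ≤ ∑ j ∈ Finset.range (N+1), f j ^ (r+2) := by
      rw [Finset.sum_range_succ']
      have := pow_nonneg (hf0 0) (r+2); linarith
    have h5 : ∑ k ∈ Finset.range N, f k ^ (r+2) ≤ ∑ j ∈ Finset.range (N+1), f j ^ (r+2) := by
      rw [Finset.sum_range_succ]
      have := pow_nonneg (hf0 N) (r+2); linarith
    nlinarith [mul_le_mul_of_nonneg_left h4 (norm_nonneg φ),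
      mul_le_mul_of_nonneg_left h5 (norm_nonneg φ)]
  have hX : ∀ n, ∑ j ∈ Finset.range n, f j ^ (r+2) ≤ 1 / 2 := by
    intro n
    induction n with
    | zero => simp
    | succ N ih =>
      set X := ∑ j ∈ Finset.range (N+1), f j ^ (r+2) with hXd
      have hX0 : 0 ≤ X := Finset.sum_nonneg fun j _ => pow_nonneg (hf0 j) _
      have hX1 : X ≤ 1 := by
        rw [hXd, Finset.sum_range_succ]
        have : f N ^ (r+2) ≤ f N ^ 1 :=
          pow_le_pow_of_le_one (hf0 N) ((hf1 N).trans (by linarith)) (by omega)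
        have := hf1 N
        rw [pow_one] at *
        linarith
      set s := X ^ (1 / ((r:ℝ)+2)) with hs
      have hs0 : 0 ≤ s := by positivity
      have hsX : X = s ^ (r+2) := by
        rw [hs, ← Real.rpow_natCast, ← Real.rpow_mul hX0]
        have : 1 / ((r:ℝ)+2) * ((r+2 : ℕ) : ℝ) = 1 := by push_cast; field_simp
        rw [this, Real.rpow_one]
      have hst := strich_sum r hr N f hf0 s hs0 hsX A hA
        (fun j => UH α hα (-(τ j)) (lp.single 2 (ν j) 1)) (fun j => v (τ j))
        (fun i j => by rw [UH_inner]; exact hdec i j _ _ _ (hτ i) (hτ j))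
        (fun j => by rw [UH_test]; exact hν j)
      have hB : ‖v (τ 0)‖ + ∑ k ∈ Finset.range N, ‖v (τ (k+1)) - v (τ k)‖ ≤ 3 * ‖φ‖ := by
        have := hstep N
        rw [hn]
        nlinarith [norm_nonneg φ]
      have hs1 : s ≤ 1 / 2 := by
        refine hst.trans (le_trans ?_ h2)
        exact mul_le_mul_of_nonneg_left hB (by positivity)
      rw [hsX]
      calc s ^ (r+2) ≤ s ^ 1 := pow_le_pow_of_le_one hs0 (by linarith) (by omega)
        _ ≤ 1 / 2 := by simpa using hs1
  have hsm : Summable (fun j => f j ^ (r+2)) :=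
    summable_of_sum_range_le (fun j => pow_nonneg (hf0 j) _) hX
  have hsm' : Summable (fun j => ‖φ‖ * f j ^ (r+2)) := hsm.mul_left _
  have hcs : CauchySeq (fun k : ℕ => v k) := by
    refine cauchySeq_of_dist_le_of_summable _ (fun k => ?_) hsm'
    rw [dist_comm, dist_eq_norm]
    apply hmv k <;> simp
  obtain ⟨vp, hvp⟩ := cauchySeq_tendsto_of_complete hcs
  refine ⟨vp, ?_⟩
  have hfl : Tendsto (fun t : ℝ => ⌊t⌋₊) atTop atTop := tendsto_nat_floor_atTop
  have hA1 : Tendsto (fun t : ℝ => v (⌊t⌋₊ : ℕ)) atTop (𝓝 vp) := hvp.comp hfl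
  have hA2 : Tendsto (fun t : ℝ => v t - v (⌊t⌋₊ : ℕ)) atTop (𝓝 0) := by
    refine squeeze_zero_norm' ?_ (hsm'.tendsto_atTop_zero.comp hfl)
    filter_upwards [eventually_ge_atTop 0] with t ht
    exact hmv _ _ _ (by simp) ⟨Nat.floor_le ht, (Nat.lt_floor_add_one t).le⟩
  have := hA2.add hA1
  simpa using this

lemma Hs_norm_sq (x : Hs) : ‖x‖ ^ 2 = ∑' n, ‖x n‖ ^ 2 := by
  have := lp.norm_rpow_eq_tsum (p := 2) (by norm_num) x
  simpa using this

lemma Hs_summable (x : Hs) : Summable (fun n => ‖x n‖ ^ 2) := by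
  have := (lp.memℓp x).summable (by norm_num)
  simpa using this

lemma memlp_of_summable (g : ℤ → ℂ) (h : Summable fun n => ‖g n‖ ^ 2) : Memℓp g 2 :=
  memℓp_gen (by simpa using h)

lemma duhamel (α : ℝ) (hα : 0 < α) (p : ℝ) (hp : 2 ≤ p) (φ : Hs) (hφ : ‖φ‖ ≤ 1)
    (v : ℝ → Hs) (hv0 : v 0 = φ) (hn : ∀ t, ‖v t‖ = ‖φ‖)
    (hv : ∀ t, HasDerivAt v (Complex.I • UH α hα (-t) (G p hp (UH α hα t (v t)))) t)
    (t : ℝ) (n : ℤ) :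
    UH α hα t (v t) n = Uprop α t φ n + Complex.I * ∫ s in (0:ℝ)..t,
      Uprop α (t - s) (fun m => ((‖UH α hα s (v s) m‖ ^ (p-1) : ℝ) : ℂ) * UH α hα s (v s) m) n := by
  have hvc : Continuous v := continuous_iff_continuousAt.2 fun t => (hv t).continuousAt
  have huc : Continuous (fun t => UH α hα t (v t)) := UH_cont α hα v hvc _ continuous_id
  have hGc : Continuous (fun t => G p hp (UH α hα t (v t))) := G_cont p hp _ huc fun t => by
    rw [LinearIsometry.norm_map, hn]; exact hφ
  have hWc : Continuous (fun s => UH α hα (-s) (G p hp (UH α hα s (v s)))) :=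
    UH_cont α hα (fun s => G p hp (UH α hα s (v s))) hGc (fun s => -s) continuous_neg
  have hFc : Continuous (fun s => Complex.I • UH α hα (-s) (G p hp (UH α hα s (v s)))) :=
    hWc.const_smul Complex.I
  have hIntg : ∫ s in (0:ℝ)..t, Complex.I • UH α hα (-s) (G p hp (UH α hα s (v s))) = v t - v 0 :=
    intervalIntegral.integral_eq_sub_of_hasDerivAt (fun s _ => hv s) (hFc.intervalIntegrable _ _)
  rw [intervalIntegral.integral_smul] at hIntg
  set T : Hs →L[ℂ] ℂ := (lp.evalCLM ℂ (fun _ : ℤ => ℂ) 2 n).comp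
    (UH α hα t).toContinuousLinearMap with hT
  have hTa : ∀ x, T x = UH α hα t x n := fun x => rfl
  have h1 := ContinuousLinearMap.intervalIntegral_comp_comm (μ := volume) T
    (hWc.intervalIntegrable 0 t)
  have h2 : v t = φ + Complex.I • ∫ s in (0:ℝ)..t, UH α hα (-s) (G p hp (UH α hα s (v s))) := by
    rw [hIntg, hv0]; abel
  rw [← hTa, h2, map_add, map_smul, ← h1, hTa, UH_eq, smul_eq_mul]
  congr 2
  refine intervalIntegral.integral_congr fun s _ => ?_
  simp only [hTa]
  rw [← UH_add, UH_eq]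
  rfl


lemma main_aux (α : ℝ) (hα : 0 < α) (p : ℝ) (r : ℕ) (hr : 2 ≤ r)
    (hpr : (r:ℝ) + 3 ≤ p) (C : ℝ) (hC : 0 ≤ C)
    (hK : ∀ t : ℝ, t ≠ 0 → ∀ n : ℤ, ‖Kker α t n‖ ≤ C * |t| ^ (-(2 / ((r : ℝ) + 2)))) :
    ∃ δ : ℝ, 0 < δ ∧
      ∀ φ : ℤ → ℂ, Summable (fun n : ℤ => ‖φ n‖ ^ 2) →
        Real.sqrt (∑' n : ℤ, ‖φ n‖ ^ 2) < δ →
        ∃ u : ℝ → ℤ → ℂ, IsGlobalSolution α p φ u ∧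
          ∃! uplus : ℤ → ℂ,
            Summable (fun n : ℤ => ‖uplus n‖ ^ 2) ∧
            (∑' n : ℤ, ‖uplus n‖ ^ 2) = (∑' n : ℤ, ‖φ n‖ ^ 2) ∧
            Tendsto (fun t : ℝ => ∑' n : ℤ, ‖u t n - Uprop α t uplus n‖ ^ 2)
              atTop (𝓝 0) := by
  have hp : 2 ≤ p := by linarith [Nat.cast_nonneg (α := ℝ) r]
  obtain ⟨A, hA, hdec⟩ := Kker_decay2 α r C hC hK
  set Q := Real.sqrt (18 * A) with hQ
  have hQ0 : 0 ≤ Q := Real.sqrt_nonneg _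
  refine ⟨1 / (12 * (Q + 1)), by positivity, fun φ₀ hφ₀ hlt => ?_⟩
  set φ : Hs := ⟨φ₀, memlp_of_summable φ₀ hφ₀⟩ with hφ
  have hφa : ∀ n, φ n = φ₀ n := fun n => rfl
  have hnφ : ‖φ‖ = Real.sqrt (∑' n : ℤ, ‖φ₀ n‖ ^ 2) := by
    have := Hs_norm_sq φ
    rw [show (∑' n : ℤ, ‖φ₀ n‖ ^ 2) = ‖φ‖ ^ 2 from this.symm, Real.sqrt_sq (norm_nonneg _)]
  rw [← hnφ] at hlt
  have hlt' : ‖φ‖ * (12 * (Q + 1)) < 1 := (lt_div_iff₀ (by positivity)).1 hlt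
  have hφ0 := norm_nonneg φ
  have h1 : ‖φ‖ ≤ 1 / 2 := by nlinarith [mul_nonneg hφ0 hQ0]
  have h2 : 2 * Q * (3 * ‖φ‖) ≤ 1 / 2 := by nlinarith [mul_nonneg hφ0 hQ0]
  obtain ⟨v, hv0, hn, hv⟩ := exists_solution α hα p hp φ (by linarith)
  obtain ⟨vp, hvp⟩ := bootstrap α hα p hp r hr hpr A hA hdec φ h1 h2 v hn hv
  have hvc : Continuous v := continuous_iff_continuousAt.2 fun t => (hv t).continuousAt
  have huc : Continuous (fun t => UH α hα t (v t)) := UH_cont α hα v hvc _ continuous_id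
  have hdiff : ∀ (x : Hs) (t : ℝ), ∑' n : ℤ, ‖UH α hα t (v t) n - Uprop α t x n‖ ^ 2
      = ‖v t - x‖ ^ 2 := by
    intro x t
    rw [← LinearIsometry.norm_map (UH α hα t) (v t - x), Hs_norm_sq, map_sub]
    refine tsum_congr fun n => ?_
    rw [← UH_eq α hα]
    rfl
  refine ⟨fun t n => UH α hα t (v t) n, ⟨fun t _ => Hs_summable _, fun t₀ _ => ?_,
    fun t _ n => ?_⟩, fun n => vp n, ⟨Hs_summable vp, ?_, ?_⟩, ?_⟩
  · have h3 : ∀ t, ∑' n : ℤ, ‖UH α hα t (v t) n - UH α hα t₀ (v t₀) n‖ ^ 2 =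
        ‖UH α hα t (v t) - UH α hα t₀ (v t₀)‖ ^ 2 := fun t =>
      (Hs_norm_sq (UH α hα t (v t) - UH α hα t₀ (v t₀))).symm
    simp only [h3]
    have h4 : Continuous (fun t => ‖UH α hα t (v t) - UH α hα t₀ (v t₀)‖ ^ 2) := by fun_prop
    have h5 := h4.tendsto t₀
    simp only [sub_self, norm_zero, ne_eq, OfNat.ofNat_ne_zero, not_false_eq_true, zero_pow] at h5
    exact h5.mono_left nhdsWithin_le_nhds
  · exact duhamel α hα p hp φ (by linarith) v hv0 hn hv t n
  · rw [← Hs_norm_sq vp]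
    have h3 : Tendsto (fun t => ‖v t‖) atTop (𝓝 ‖vp‖) := hvp.norm
    simp only [hn] at h3
    rw [tendsto_nhds_unique h3 tendsto_const_nhds]
    exact Hs_norm_sq φ
  · show Tendsto (fun t : ℝ => ∑' n : ℤ, ‖UH α hα t (v t) n - Uprop α t vp n‖ ^ 2) atTop (𝓝 0)
    simp only [hdiff]
    have h3 : Tendsto (fun t => ‖v t - vp‖ ^ 2) atTop (𝓝 (‖vp - vp‖ ^ 2)) :=
      ((hvp.sub_const vp).norm).pow 2
    simpa using h3
  · rintro y ⟨hy, -, hyt⟩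
    set Y : Hs := ⟨y, memlp_of_summable y hy⟩ with hY
    have h3 : Tendsto (fun t => ‖v t - Y‖ ^ 2) atTop (𝓝 0) := by
      have h4 : (fun t : ℝ => ∑' n : ℤ, ‖UH α hα t (v t) n - Uprop α t y n‖ ^ 2) =
          fun t => ‖v t - Y‖ ^ 2 := by
        funext t; exact hdiff Y t
      rw [← h4]; exact hyt
    have h5 : Tendsto (fun t => ‖v t - Y‖ ^ 2) atTop (𝓝 (‖vp - Y‖ ^ 2)) :=
      ((hvp.sub_const Y).norm).pow 2
    have h6 := tendsto_nhds_unique h5 h3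
    have h7 : vp = Y := by
      rw [← sub_eq_zero, ← norm_eq_zero]
      exact pow_eq_zero_iff (two_ne_zero) |>.1 h6
    rw [h7]

theorem stmt19 (α p : ℝ)
    (hcase : (0 < α ∧ α ≤ 1 ∧ 5 ≤ p) ∨ (1 < α ∧ 7 ≤ p)) :
    ∃ δ : ℝ, 0 < δ ∧
      ∀ φ : ℤ → ℂ, Summable (fun n : ℤ => ‖φ n‖ ^ 2) →
        Real.sqrt (∑' n : ℤ, ‖φ n‖ ^ 2) < δ →
        ∃ u : ℝ → ℤ → ℂ, IsGlobalSolution α p φ u ∧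
          ∃! uplus : ℤ → ℂ,
            Summable (fun n : ℤ => ‖uplus n‖ ^ 2) ∧
            (∑' n : ℤ, ‖uplus n‖ ^ 2) = (∑' n : ℤ, ‖φ n‖ ^ 2) ∧
            Tendsto (fun t : ℝ => ∑' n : ℤ, ‖u t n - Uprop α t uplus n‖ ^ 2)
              atTop (𝓝 0) := by
  rcases hcase with ⟨hα, hα1, hp⟩ | ⟨hα, hp⟩
  · obtain ⟨C, hC, hK⟩ := Kker_bound_le_one α hα hα1
    refine main_aux α hα p 2 le_rfl (by push_cast; linarith) C hC fun t ht n => ?_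
    have e : (-(2 / (((2:ℕ) : ℝ) + 2))) = -(1/2 : ℝ) := by norm_num
    rw [e]; exact hK t ht n
  · obtain ⟨C, hC, hK⟩ := Kker_bound_gt_one α hα
    refine main_aux α (by linarith) p 4 (by norm_num) (by push_cast; linarith) C hC
      fun t ht n => ?_
    have e : (-(2 / (((4:ℕ) : ℝ) + 2))) = -(1/3 : ℝ) := by norm_num
    rw [e]; exact hK t ht n
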